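/- arXiv:1508.00099 — 2 statements merged into one kernel-verified Lean document; each statement's English description precedes it below -/
import Mathlib

section
/- Let H_k ∈ (0,1) and integers n_k ≥ 1 be two sequences with H_k → 0 as k → ∞. Then the sequence f_k := f(H_k, n_k) is bounded if and only if the sequence (n_k) is bounded. -/
open MeasureTheory ProbabilityTheory Real Set Filter Topology

noncomputable section

/-- `X` is a centered Gaussian process on the time set `S`: every finite linear
combination `∑ i, c i * X (ts i)` of its values at times in `S` is a centered
Gaussian random variable. -/
def IsCenteredGaussianOn {Ω : Type} [MeasurableSpace Ω] (μ : Measure Ω)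
    (X : ℝ → Ω → ℝ) (S : Set ℝ) : Prop :=
  (∀ t ∈ S, Measurable (X t)) ∧
  ∀ (k : ℕ) (c : Fin k → ℝ) (ts : Fin k → ℝ), (∀ i, ts i ∈ S) →
    ∃ v : NNReal, μ.map (fun ω => ∑ i, c i * X (ts i) ω) = gaussianReal 0 v

/-- The `L²`-norm `‖Y‖₂ = (E Y²)^{1/2}` of a real random variable. -/
def l2norm {Ω : Type} [MeasurableSpace Ω] (μ : Measure Ω) (Y : Ω → ℝ) : ℝ :=
  Real.sqrt (∫ ω, (Y ω) ^ 2 ∂μ)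

/-- The expected supremum `E [sup_{0 ≤ t ≤ 1} X_t]`. -/
def expMax {Ω : Type} [MeasurableSpace Ω] (μ : Measure Ω) (X : ℝ → Ω → ℝ) : ℝ :=
  ∫ ω, (⨆ t : Icc (0:ℝ) 1, X t.1 ω) ∂μ

/-- The expected maximum over the grid: `E [max_{0 ≤ i ≤ n} X_{i/n}]`. -/
def expMaxGrid {Ω : Type} [MeasurableSpace Ω] (μ : Measure Ω) (X : ℝ → Ω → ℝ) (n : ℕ) : ℝ :=
  ∫ ω, (⨆ i : Fin (n + 1), X (((i : ℕ) : ℝ) / (n : ℝ)) ω) ∂μ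

/-- `B` is a fractional Brownian motion with Hurst parameter `H`: a centered Gaussian
process on `[0,∞)` with a.s. continuous sample paths, `B 0 = 0`, and covariance
`E[B_s B_t] = (s^{2H} + t^{2H} - |t-s|^{2H}) / 2`. -/
def IsFBM {Ω : Type} [MeasurableSpace Ω] (μ : Measure Ω) (H : ℝ) (B : ℝ → Ω → ℝ) : Prop :=
  IsCenteredGaussianOn μ B (Ici 0) ∧
  (∀ᵐ ω ∂μ, ContinuousOn (fun t => B t ω) (Ici 0)) ∧
  (∀ᵐ ω ∂μ, B 0 ω = 0) ∧
  ∀ s t : ℝ, 0 ≤ s → 0 ≤ t →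
    ∫ ω, B s ω * B t ω ∂μ = (s ^ (2 * H) + t ^ (2 * H) - |t - s| ^ (2 * H)) / 2

/-! The law of `B` on the grid degenerates as `H → 0`: for fixed `m` and any `n ≥ m`, the grid
contains `m` points with mutual distances in `[1 / (2 * m), 1]`, and all increments of `B` between
them have variance tending to one, so the values of `B` there form a nearly equilateral simplex in
`L²`. Their deviations from their average are then almost uncorrelated, with variance about `1 / 2`.
Multiply these deviations by a large constant `b`. As long as `m` is large compared with
`exp (b ^ 2)`, the average of the Wick exponentials of the resulting variables has mean one and
small variance, so it exceeds `1 / 2` with probability close to one; then the largest of these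
variables is at least about `b ^ 2 / 4 - log 2`. Since the average of the values has mean zero, the
expected maximum of `B` is at least about `b / 4 - log 2 / b`, which is unbounded in `b`.
Conversely, the maximum over the grid is in absolute value at most the sum of `n + 1` absolute
values of mean at most one. -/

section ExponentialTilt

variable {Ω : Type*} [MeasurableSpace Ω] {μ : Measure Ω} {Y Z : Ω → ℝ}

/-- The Wick exponential `:e^Y: = exp (Y - Var Y / 2)`, the normalization of `e^Y` that has mean
one when `Y` is a centered Gaussian variable. -/
def wickExp (μ : Measure Ω) (Y : Ω → ℝ) (ω : Ω) : ℝ :=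
  exp (Y ω - Var[Y; μ] / 2)

lemma integrable_wickExp (hY : HasGaussianLaw Y μ) : Integrable (wickExp μ Y) μ := by
  have hexp : Integrable (fun x ↦ exp (1 * x)) (μ.map Y) := by
    rw [hY.map_eq_gaussianReal]
    exact integrable_exp_mul_gaussianReal 1
  simp only [one_mul] at hexp
  have hdiv : wickExp μ Y = fun ω ↦ exp (Y ω) / exp (Var[Y; μ] / 2) :=
    funext fun ω ↦ exp_sub _ _
  rw [hdiv]
  exact (hexp.comp_aemeasurable hY.aemeasurable).div_const _

lemma integral_wickExp (hY : HasGaussianLaw Y μ) (hY0 : μ[Y] = 0) : μ[wickExp μ Y] = 1 := by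
  have hmgf := mgf_gaussianReal hY.map_eq_gaussianReal 1
  simp only [mgf, one_mul, hY0, zero_add, one_pow, mul_one,
    coe_toNNReal _ (variance_nonneg Y μ)] at hmgf
  simp only [wickExp, exp_sub]
  rw [integral_div, hmgf, div_self (exp_ne_zero _)]

lemma wickExp_mul_wickExp [IsFiniteMeasure μ] (hY : MemLp Y 2 μ) (hZ : MemLp Z 2 μ) :
    wickExp μ Y * wickExp μ Z = exp cov[Y, Z; μ] • wickExp μ (Y + Z) := by
  ext ω
  simp only [wickExp, Pi.mul_apply, Pi.smul_apply, Pi.add_apply, smul_eq_mul, ← exp_add,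
    variance_add hY hZ]
  ring_nf

lemma memLp_two_wickExp (hY : HasGaussianLaw Y μ) : MemLp (wickExp μ Y) 2 μ := by
  have := hY.isProbabilityMeasure
  have hYY : HasGaussianLaw (Y + Y) μ := by simpa only [two_smul] using hY.smul 2
  rw [memLp_two_iff_integrable_sq (integrable_wickExp hY).aestronglyMeasurable]
  have hsq : (fun ω ↦ wickExp μ Y ω ^ 2) = wickExp μ Y * wickExp μ Y := by
    ext ω
    exact sq _
  rw [hsq, wickExp_mul_wickExp hY.memLp_two hY.memLp_two]
  exact (integrable_wickExp hYY).smul _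

lemma covariance_wickExp (hYZ : HasGaussianLaw (fun ω ↦ (Y ω, Z ω)) μ)
    (hY0 : μ[Y] = 0) (hZ0 : μ[Z] = 0) :
    cov[wickExp μ Y, wickExp μ Z; μ] = exp cov[Y, Z; μ] - 1 := by
  have := hYZ.isProbabilityMeasure
  have hsum : μ[Y + Z] = 0 := by
    rw [integral_add' hYZ.fst.integrable hYZ.snd.integrable, hY0, hZ0, add_zero]
  rw [covariance_eq_sub (memLp_two_wickExp hYZ.fst) (memLp_two_wickExp hYZ.snd),
    wickExp_mul_wickExp hYZ.fst.memLp_two hYZ.snd.memLp_two, integral_wickExp hYZ.fst hY0,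
    integral_wickExp hYZ.snd hZ0]
  simp only [Pi.smul_apply, smul_eq_mul, integral_const_mul, integral_wickExp hYZ.add hsum, mul_one]

lemma sub_log_two_mul_one_sub_variance_le_integral [IsProbabilityMeasure μ] {M u : Ω → ℝ} {a : ℝ}
    (ha : log 2 ≤ a) (hM : Integrable M μ) (hM0 : ∀ ω, 0 ≤ M ω) (hu : MemLp u 2 μ)
    (hu1 : μ[u] = 1) (huM : ∀ ω, exp a * u ω ≤ exp (M ω)) :
    (a - log 2) * (1 - 4 * Var[u; μ]) ≤ μ[M] := by
  have hsq : Integrable (fun ω ↦ (u ω - 1) ^ 2) μ := (hu.sub (memLp_const 1)).integrable_sq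
  have hvar : ∫ ω, (u ω - 1) ^ 2 ∂μ = Var[u; μ] := by
    rw [variance_eq_integral hu.aemeasurable, hu1]
  -- As in Chebyshev's inequality, `1 - 4 (u - 1) ^ 2` is a lower bound for the indicator of
  -- `1 / 2 < u`.
  have hpointwise ω : (a - log 2) * (1 - 4 * (u ω - 1) ^ 2) ≤ M ω := by
    rcases le_or_gt (u ω) (1 / 2) with hle | hgt
    · refine le_trans (mul_nonpos_of_nonneg_of_nonpos ?_ ?_) (hM0 ω)
      · linarith
      · nlinarith
    · have hlog : a - log 2 ≤ M ω := by
        rw [← exp_le_exp, exp_sub, exp_log two_pos]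
        refine le_trans ?_ (huM ω)
        rw [div_eq_mul_one_div]
        gcongr
      nlinarith [mul_nonneg (sub_nonneg.2 ha) (sq_nonneg (u ω - 1))]
  calc (a - log 2) * (1 - 4 * Var[u; μ])
      = ∫ ω, (a - log 2) * (1 - 4 * (u ω - 1) ^ 2) ∂μ := by
        rw [integral_const_mul, integral_sub (integrable_const 1) (hsq.const_mul 4),
          integral_const_mul, hvar]
        simp only [integral_const, probReal_univ, one_smul]
    _ ≤ μ[M] := integral_mono
        (((integrable_const 1).sub (hsq.const_mul 4)).const_mul _) hM hpointwise

variable {ι : Type*} [Fintype ι]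

lemma variance_average_wickExp {Y : ι → Ω → ℝ} (hY : HasGaussianLaw (fun ω i ↦ Y i ω) μ)
    (hY0 : ∀ i, μ[Y i] = 0) :
    Var[fun ω ↦ (∑ i, wickExp μ (Y i) ω) / Fintype.card ι; μ] =
      (∑ i, ∑ j, (exp cov[Y i, Y j; μ] - 1)) / Fintype.card ι ^ 2 := by
  have := hY.isProbabilityMeasure
  simp only [div_eq_inv_mul, variance_const_mul,
    variance_fun_sum fun i ↦ memLp_two_wickExp (hY.eval i), inv_pow,
    covariance_wickExp (hY.prodMk _ _) (hY0 _) (hY0 _)]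

lemma sub_log_two_mul_le_integral_of_gaussian_le [Nonempty ι] {Y : ι → Ω → ℝ} {M : Ω → ℝ} {a : ℝ}
    (hY : HasGaussianLaw (fun ω i ↦ Y i ω) μ) (hY0 : ∀ i, μ[Y i] = 0) (ha : log 2 ≤ a)
    (haY : ∀ i, a ≤ Var[Y i; μ] / 2) (hM : Integrable M μ) (hM0 : ∀ ω, 0 ≤ M ω)
    (hYM : ∀ i ω, Y i ω ≤ M ω) :
    (a - log 2) * (1 - 4 * ((∑ i, ∑ j, (exp cov[Y i, Y j; μ] - 1)) / Fintype.card ι ^ 2)) ≤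
      μ[M] := by
  have := hY.isProbabilityMeasure
  have hcard : (Fintype.card ι : ℝ) ≠ 0 := Nat.cast_ne_zero.2 Fintype.card_ne_zero
  rw [← variance_average_wickExp hY hY0]
  refine sub_log_two_mul_one_sub_variance_le_integral ha hM hM0 ?_ ?_ fun ω ↦ ?_
  · simp only [div_eq_inv_mul]
    exact (memLp_finsetSum _ fun i _ ↦ memLp_two_wickExp (hY.eval i)).const_mul _
  · rw [integral_div, integral_finsetSum _ fun i _ ↦ integrable_wickExp (hY.eval i)]
    simp only [integral_wickExp (hY.eval _) (hY0 _), Finset.sum_const, Finset.card_univ,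
      nsmul_eq_mul, mul_one, div_self hcard]
  · have hle i : exp a * wickExp μ (Y i) ω ≤ exp (M ω) := by
      rw [wickExp, ← exp_add, exp_le_exp]
      linarith [haY i, hYM i ω]
    rw [mul_div_assoc', div_le_iff₀ (by positivity), Finset.mul_sum, mul_comm, ← nsmul_eq_mul]
    exact Finset.sum_le_card_nsmul _ _ _ fun i _ ↦ hle i

end ExponentialTilt

section NearlyEquilateral

variable {Ω ι : Type*} [Fintype ι]

/-- The deviation `X i - (1 / |ι|) ∑ k, X k` of the member `X i` of a finite family of random
variables from the average of the family. -/
def deviation (X : ι → Ω → ℝ) (i : ι) (ω : Ω) : ℝ :=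
  X i ω - (∑ k, X k ω) / Fintype.card ι

lemma deviation_eq_average_sub [Nonempty ι] (X : ι → Ω → ℝ) (i : ι) :
    deviation X i = fun ω ↦ (Fintype.card ι : ℝ)⁻¹ * ∑ k, (X i - X k) ω := by
  have hcard : (Fintype.card ι : ℝ) ≠ 0 := Nat.cast_ne_zero.2 Fintype.card_ne_zero
  ext ω
  simp only [deviation, Pi.sub_apply, Finset.sum_sub_distrib, Finset.sum_const, Finset.card_univ,
    nsmul_eq_mul]
  field_simp

variable [MeasurableSpace Ω] {μ : Measure Ω} {X : ι → Ω → ℝ}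

lemma covariance_sub_sub_eq_variance [IsFiniteMeasure μ] {U V W Z : Ω → ℝ} (hU : MemLp U 2 μ)
    (hV : MemLp V 2 μ) (hW : MemLp W 2 μ) (hZ : MemLp Z 2 μ) :
    cov[U - V, W - Z; μ] =
      (Var[U - Z; μ] + Var[V - W; μ] - Var[U - W; μ] - Var[V - Z; μ]) / 2 := by
  rw [covariance_sub_left hU hV (hW.sub hZ), covariance_sub_right hU hW hZ,
    covariance_sub_right hV hW hZ, variance_sub hU hZ, variance_sub hV hW, variance_sub hU hW,
    variance_sub hV hZ]
  ring

lemma covariance_deviation [Nonempty ι] [IsFiniteMeasure μ] (hX : ∀ i, MemLp (X i) 2 μ)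
    (i j : ι) :
    cov[deviation X i, deviation X j; μ] =
      (∑ k, ∑ l, cov[X i - X k, X j - X l; μ]) / Fintype.card ι ^ 2 := by
  rw [deviation_eq_average_sub, deviation_eq_average_sub, covariance_const_mul_left,
    covariance_const_mul_right,
    covariance_fun_sum_fun_sum (fun k ↦ (hX i).sub (hX k)) fun l ↦ (hX j).sub (hX l)]
  field_simp

lemma variance_deviation [Nonempty ι] [IsFiniteMeasure μ] (hX : ∀ i, MemLp (X i) 2 μ) (i : ι) :
    Var[deviation X i; μ] = (∑ k, ∑ l, cov[X i - X k, X i - X l; μ]) / Fintype.card ι ^ 2 := by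
  have hmeas : AEMeasurable (deviation X i) μ := by
    rw [deviation_eq_average_sub]
    exact (Finset.aemeasurable_fun_sum _ fun k _ ↦
      ((hX i).sub (hX k)).aemeasurable).const_mul _
  rw [← covariance_self hmeas, covariance_deviation hX]

lemma covariance_deviation_le [Nonempty ι] [IsFiniteMeasure μ] {ε : ℝ} (hX : ∀ i, MemLp (X i) 2 μ)
    (hε : 0 ≤ ε) (hle : ∀ i j, Var[X i - X j; μ] ≤ 1)
    (hge : ∀ i j, i ≠ j → 1 - ε ≤ Var[X i - X j; μ]) {i j : ι} (hij : i ≠ j) :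
    cov[deviation X i, deviation X j; μ] ≤ ε + 1 / (2 * Fintype.card ι) := by
  classical
  have hterm k l : cov[X i - X k, X j - X l; μ] ≤ ε + if k = l then 1 / 2 else 0 := by
    rw [covariance_sub_sub_eq_variance (hX i) (hX k) (hX j) (hX l)]
    split_ifs with hkl
    · linarith [hle i l, hle k j, hge i j hij, variance_nonneg (X k - X l) μ]
    · linarith [hle i l, hle k j, hge i j hij, hge k l hkl]
  rw [covariance_deviation hX, div_le_iff₀ (by positivity)]
  refine (Finset.sum_le_sum fun k _ ↦ Finset.sum_le_sum fun l _ ↦ hterm k l).trans_eq ?_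
  simp only [Finset.sum_add_distrib, Finset.sum_const, Finset.card_univ, nsmul_eq_mul,
    Finset.sum_ite_eq, Finset.mem_univ, if_true]
  field_simp

lemma variance_deviation_le_one [Nonempty ι] [IsFiniteMeasure μ] (hX : ∀ i, MemLp (X i) 2 μ)
    (hle : ∀ i j, Var[X i - X j; μ] ≤ 1) (i : ι) : Var[deviation X i; μ] ≤ 1 := by
  have hterm k l : cov[X i - X k, X i - X l; μ] ≤ 1 := by
    rw [covariance_sub_sub_eq_variance (hX i) (hX k) (hX i) (hX l)]
    linarith [hle i l, hle k i, variance_nonneg (X i - X i) μ, variance_nonneg (X k - X l) μ]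
  rw [variance_deviation hX, div_le_iff₀ (by positivity)]
  refine (Finset.sum_le_sum fun k _ ↦ Finset.sum_le_sum fun l _ ↦ hterm k l).trans_eq ?_
  simp only [Finset.sum_const, Finset.card_univ, nsmul_eq_mul]
  ring

lemma le_variance_deviation [Nonempty ι] [IsFiniteMeasure μ] {ε : ℝ} (hX : ∀ i, MemLp (X i) 2 μ)
    (hε : 0 ≤ ε) (hle : ∀ i j, Var[X i - X j; μ] ≤ 1)
    (hge : ∀ i j, i ≠ j → 1 - ε ≤ Var[X i - X j; μ]) (i : ι) :
    1 / 2 - ε - 1 / Fintype.card ι ≤ Var[deviation X i; μ] := by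
  classical
  have hge' k l : 1 - ε - (if k = l then 1 else 0) ≤ Var[X k - X l; μ] := by
    split_ifs with hkl
    · linarith [variance_nonneg (X k - X l) μ]
    · simpa only [sub_zero] using hge k l hkl
  have hself : Var[X i - X i; μ] = 0 := by
    rw [sub_self, variance_zero]
  have hterm k l : 1 / 2 - ε - (if i = k then 1 else 0) / 2 - (if i = l then 1 else 0) / 2 ≤
      cov[X i - X k, X i - X l; μ] := by
    rw [covariance_sub_sub_eq_variance (hX i) (hX k) (hX i) (hX l), hself,
      ← neg_sub (X i) (X k), variance_neg]
    linarith [hge' i k, hge' i l, hle k l]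
  rw [variance_deviation hX, le_div_iff₀ (by positivity)]
  refine Eq.trans_le ?_ (Finset.sum_le_sum fun k _ ↦ Finset.sum_le_sum fun l _ ↦ hterm k l)
  simp only [Finset.sum_sub_distrib, Finset.sum_const, Finset.card_univ, nsmul_eq_mul,
    ← Finset.sum_div, ← Finset.mul_sum, Finset.sum_ite_eq, Finset.mem_univ, if_true]
  field_simp
  ring

lemma hasGaussianLaw_deviation (hX : HasGaussianLaw (fun ω i ↦ X i ω) μ) :
    HasGaussianLaw (fun ω i ↦ deviation X i ω) μ := by
  let coord (i : ι) : (ι → ℝ) →L[ℝ] ℝ := ContinuousLinearMap.proj i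
  refine (hX.map_fun (.pi fun i ↦ coord i - (Fintype.card ι : ℝ)⁻¹ • ∑ k, coord k)).congr ?_
  refine .of_forall fun ω ↦ funext fun i ↦ ?_
  simp [coord, deviation, div_eq_inv_mul]

lemma integrable_average (hX : ∀ i, Integrable (X i) μ) :
    Integrable (fun ω ↦ (∑ i, X i ω) / Fintype.card ι) μ :=
  (integrable_finsetSum _ fun i _ ↦ hX i).div_const _

lemma integral_average_eq_zero (hX : ∀ i, Integrable (X i) μ) (hX0 : ∀ i, μ[X i] = 0) :
    ∫ ω, (∑ i, X i ω) / Fintype.card ι ∂μ = 0 := by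
  rw [integral_div, integral_finsetSum _ fun i _ ↦ hX i]
  simp only [hX0, Finset.sum_const_zero, zero_div]

lemma integral_deviation (hX : ∀ i, Integrable (X i) μ) (hX0 : ∀ i, μ[X i] = 0) (i : ι) :
    μ[deviation X i] = 0 := by
  calc μ[deviation X i] = μ[X i] - ∫ ω, (∑ k, X k ω) / Fintype.card ι ∂μ :=
        integral_sub (hX i) (integrable_average hX)
    _ = 0 := by
        rw [hX0, integral_average_eq_zero hX hX0, sub_zero]

lemma sum_exp_covariance_deviation_le [Nonempty ι] [IsFiniteMeasure μ] {ε : ℝ}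
    (hX : ∀ i, MemLp (X i) 2 μ) (hε : 0 ≤ ε) (hle : ∀ i j, Var[X i - X j; μ] ≤ 1)
    (hge : ∀ i j, i ≠ j → 1 - ε ≤ Var[X i - X j; μ]) (b : ℝ) :
    (∑ i, ∑ j, (exp (b ^ 2 * cov[deviation X i, deviation X j; μ]) - 1)) / Fintype.card ι ^ 2 ≤
      exp (b ^ 2) / Fintype.card ι + (exp (b ^ 2 * (ε + 1 / (2 * Fintype.card ι))) - 1) := by
  classical
  set c := ε + 1 / (2 * (Fintype.card ι : ℝ))
  have hterm i j : exp (b ^ 2 * cov[deviation X i, deviation X j; μ]) - 1 ≤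
      (if i = j then exp (b ^ 2) else 0) + (exp (b ^ 2 * c) - 1) := by
    split_ifs with hij
    · subst hij
      have hdiag : exp (b ^ 2 * cov[deviation X i, deviation X i; μ]) ≤ exp (b ^ 2) := by
        have hone : cov[deviation X i, deviation X i; μ] ≤ 1 := by
          rw [covariance_deviation hX, ← variance_deviation hX]
          exact variance_deviation_le_one hX hle i
        exact exp_le_exp.2 (mul_le_of_le_one_right (sq_nonneg b) hone)
      linarith [exp_pos (b ^ 2 * c)]
    · rw [zero_add]
      gcongr
      exact covariance_deviation_le hX hε hle hge hij
  rw [div_le_iff₀ (by positivity)]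
  refine (Finset.sum_le_sum fun i _ ↦ Finset.sum_le_sum fun j _ ↦ hterm i j).trans_eq ?_
  simp only [Finset.sum_add_distrib, Finset.sum_const, Finset.card_univ, nsmul_eq_mul,
    Finset.sum_ite_eq, Finset.mem_univ, if_true]
  field_simp

lemma le_mul_integral_of_nearly_equilateral [Nonempty ι] {S : Ω → ℝ} {b ε : ℝ}
    (hX : HasGaussianLaw (fun ω i ↦ X i ω) μ) (hX0 : ∀ i, μ[X i] = 0) (hε : 0 ≤ ε)
    (hle : ∀ i j, Var[X i - X j; μ] ≤ 1) (hge : ∀ i j, i ≠ j → 1 - ε ≤ Var[X i - X j; μ])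
    (hS : Integrable S μ) (hXS : ∀ i ω, X i ω ≤ S ω) (hb : 0 ≤ b)
    (hlog : log 2 ≤ b ^ 2 * (1 / 2 - ε - 1 / Fintype.card ι) / 2) :
    (b ^ 2 * (1 / 2 - ε - 1 / Fintype.card ι) / 2 - log 2) * (1 - 4 * (exp (b ^ 2) /
      Fintype.card ι + (exp (b ^ 2 * (ε + 1 / (2 * Fintype.card ι))) - 1))) ≤ b * μ[S] := by
  have := hX.isProbabilityMeasure
  have hint i : Integrable (X i) μ := (hX.eval i).integrable
  have hL2 i : MemLp (X i) 2 μ := (hX.eval i).memLp_two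
  have hmean : ∫ ω, b * (S ω - (∑ k, X k ω) / Fintype.card ι) ∂μ = b * μ[S] := by
    rw [integral_const_mul, integral_sub hS (integrable_average hint),
      integral_average_eq_zero hint hX0, sub_zero]
  have havg_le ω : (∑ k, X k ω) / Fintype.card ι ≤ S ω := by
    rw [div_le_iff₀ (by positivity), mul_comm, ← nsmul_eq_mul]
    exact Finset.sum_le_card_nsmul _ _ _ fun k _ ↦ hXS k ω
  have hmain := sub_log_two_mul_le_integral_of_gaussian_le
    (Y := fun i ω ↦ b * deviation X i ω)
    (M := fun ω ↦ b * (S ω - (∑ k, X k ω) / Fintype.card ι))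
    ((hasGaussianLaw_deviation hX).fun_smul b)
    (fun i ↦ by rw [integral_const_mul, integral_deviation hint hX0, mul_zero]) hlog
    (fun i ↦ by
      rw [variance_const_mul]
      gcongr
      exact le_variance_deviation hL2 hε hle hge i)
    ((hS.sub (integrable_average hint)).const_mul b)
    (fun ω ↦ mul_nonneg hb (sub_nonneg.2 (havg_le ω)))
    (fun i ω ↦ mul_le_mul_of_nonneg_left (sub_le_sub_right (hXS i ω) _) hb)
  simp only [covariance_const_mul_left, covariance_const_mul_right, ← mul_assoc, ← sq] at hmain
  rw [hmean] at hmain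
  refine le_trans ?_ hmain
  have hbound := sum_exp_covariance_deviation_le hL2 hε hle hge b
  gcongr

lemma tendsto_nearly_equilateral_level (b : ℝ) :
    Tendsto (fun m : ℕ ↦ b ^ 2 * (1 / 2 - 1 / (m : ℝ) - 1 / m) / 2) atTop (𝓝 (b ^ 2 / 4)) := by
  have hinv : Tendsto (fun m : ℕ ↦ 1 / (m : ℝ)) atTop (𝓝 0) := tendsto_one_div_atTop_nhds_zero_nat
  convert (((hinv.const_sub (1 / 2)).sub hinv).const_mul (b ^ 2)).div_const 2 using 2
  ring

lemma tendsto_nearly_equilateral_error (b : ℝ) :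
    Tendsto (fun m : ℕ ↦ exp (b ^ 2) / m + (exp (b ^ 2 * (1 / (m : ℝ) + 1 / (2 * m))) - 1))
      atTop (𝓝 0) := by
  have hexponent : Tendsto (fun m : ℕ ↦ b ^ 2 * (1 / (m : ℝ) + 1 / (2 * m))) atTop (𝓝 0) := by
    convert tendsto_one_div_atTop_nhds_zero_nat.const_mul (b ^ 2 * (3 / 2)) using 2 <;> ring
  simpa only [exp_zero, sub_self, add_zero] using
    (tendsto_const_div_atTop_nhds_zero_nat (exp (b ^ 2))).add (hexponent.rexp.sub_const 1)

lemma eventually_le_integral_of_nearly_equilateral (μ : Measure Ω) (R : ℝ) :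
    ∀ᶠ m : ℕ in atTop, ∀ (X : Fin m → Ω → ℝ) (S : Ω → ℝ), HasGaussianLaw (fun ω i ↦ X i ω) μ →
      (∀ i, μ[X i] = 0) → (∀ i j, Var[X i - X j; μ] ≤ 1) →
      (∀ i j, i ≠ j → 1 - 1 / (m : ℝ) ≤ Var[X i - X j; μ]) → Integrable S μ →
      (∀ i ω, X i ω ≤ S ω) → R ≤ μ[S] := by
  let b := 4 * (|R| + 1)
  have hb : 0 < b := by positivity
  have hlog : log 2 < b ^ 2 / 4 := by
    nlinarith [log_two_lt_d9, abs_nonneg R]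
  have hbR : b * R < b ^ 2 / 4 - log 2 := by
    nlinarith [log_two_lt_d9, abs_nonneg R, le_abs_self R]
  have hlevel := tendsto_nearly_equilateral_level b
  have hbound := (hlevel.sub_const (log 2)).mul
    (((tendsto_nearly_equilateral_error b).const_mul 4).const_sub 1)
  simp only [mul_zero, sub_zero, mul_one] at hbound
  filter_upwards [hlevel.eventually (lt_mem_nhds hlog), hbound.eventually (lt_mem_nhds hbR),
    eventually_gt_atTop 0] with m hm_log hm_bound hm X S hX hX0 hle hge hS hXS
  have : Nonempty (Fin m) := ⟨⟨0, hm⟩⟩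
  have hmain := le_mul_integral_of_nearly_equilateral hX hX0 (by positivity) hle hge hS hXS hb.le
    (by simpa only [Fintype.card_fin] using hm_log.le)
  rw [Fintype.card_fin] at hmain
  exact le_of_mul_le_mul_left (hm_bound.le.trans hmain) hb

end NearlyEquilateral

section FiniteSupremum

variable {ι : Type*} [Nonempty ι]

lemma abs_ciSup_le_sum_abs [Fintype ι] (x : ι → ℝ) : |⨆ i, x i| ≤ ∑ i, |x i| := by
  obtain ⟨i, hi⟩ := exists_eq_ciSup_of_finite (f := x)
  rw [← hi]
  exact Finset.single_le_sum (f := fun i ↦ |x i|) (fun _ _ ↦ abs_nonneg _) (Finset.mem_univ i)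

variable {Ω : Type*} [MeasurableSpace Ω] {μ : Measure Ω} {X : ι → Ω → ℝ}

lemma integrable_ciSup [Finite ι] (hX : ∀ i, Integrable (X i) μ) :
    Integrable (fun ω ↦ ⨆ i, X i ω) μ := by
  have := Fintype.ofFinite ι
  exact (integrable_finsetSum _ fun i _ ↦ (hX i).abs).mono'
    (AEMeasurable.iSup fun i ↦ (hX i).aemeasurable).aestronglyMeasurable
    (.of_forall fun _ ↦ abs_ciSup_le_sum_abs _)

lemma abs_integral_ciSup_le [Fintype ι] (hX : ∀ i, Integrable (X i) μ) :
    |∫ ω, ⨆ i, X i ω ∂μ| ≤ ∑ i, ∫ ω, |X i ω| ∂μ := by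
  rw [← integral_finsetSum _ fun i _ ↦ (hX i).abs]
  exact abs_integral_le_integral_abs.trans (integral_mono (integrable_ciSup hX).abs
    (integrable_finsetSum _ fun i _ ↦ (hX i).abs) fun _ ↦ abs_ciSup_le_sum_abs _)

end FiniteSupremum

section FractionalBrownianMotion

variable {Ω : Type} [MeasurableSpace Ω] {μ : Measure Ω}

lemma IsCenteredGaussianOn.hasGaussianLaw {X : ℝ → Ω → ℝ} {T : Set ℝ}
    (hX : IsCenteredGaussianOn μ X T) {k : ℕ} {t : Fin k → ℝ} (ht : ∀ i, t i ∈ T) :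
    HasGaussianLaw (fun ω i ↦ X (t i) ω) μ := by
  have hmeas : Measurable fun ω i ↦ X (t i) ω := measurable_pi_lambda _ fun i ↦ hX.1 _ (ht i)
  refine ⟨isGaussian_of_map_eq_gaussianReal fun L ↦ ?_⟩
  obtain ⟨v, hv⟩ := hX.2 k (fun i ↦ L fun j ↦ if i = j then 1 else 0) t ht
  refine ⟨0, v, ?_⟩
  rw [Measure.map_map L.continuous.measurable hmeas, ← hv]
  congr 1 with ω
  simp only [Function.comp_apply, mul_comm (L _)]
  exact L.toLinearMap.pi_apply_eq_sum_univ fun i ↦ X (t i) ω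

lemma IsCenteredGaussianOn.map_eq_gaussianReal {X : ℝ → Ω → ℝ} {T : Set ℝ}
    (hX : IsCenteredGaussianOn μ X T) {t : ℝ} (ht : t ∈ T) :
    ∃ v : NNReal, μ.map (X t) = gaussianReal 0 v := by
  simpa only [Finset.univ_unique, Finset.sum_singleton, one_mul] using
    hX.2 1 (fun _ ↦ 1) (fun _ ↦ t) fun _ ↦ ht

lemma IsCenteredGaussianOn.integral_eq_zero {X : ℝ → Ω → ℝ} {T : Set ℝ}
    (hX : IsCenteredGaussianOn μ X T) {t : ℝ} (ht : t ∈ T) : μ[X t] = 0 := by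
  obtain ⟨v, hv⟩ := hX.map_eq_gaussianReal ht
  rw [← integral_id_gaussianReal (μ := 0) (v := v), ← hv]
  exact (integral_map (hX.1 t ht).aemeasurable aestronglyMeasurable_id).symm

lemma IsCenteredGaussianOn.memLp_two {X : ℝ → Ω → ℝ} {T : Set ℝ}
    (hX : IsCenteredGaussianOn μ X T) {t : ℝ} (ht : t ∈ T) : MemLp (X t) 2 μ :=
  ((hX.hasGaussianLaw (k := 1) fun _ ↦ ht).eval 0).memLp_two

variable {H : ℝ} {B : ℝ → Ω → ℝ}

lemma IsFBM.covariance_eq [IsProbabilityMeasure μ] (hB : IsFBM μ H B) {s t : ℝ} (hs : 0 ≤ s)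
    (ht : 0 ≤ t) :
    cov[B s, B t; μ] = (s ^ (2 * H) + t ^ (2 * H) - |t - s| ^ (2 * H)) / 2 := by
  obtain ⟨hgauss, -, -, hcov⟩ := hB
  rw [covariance_eq_sub (hgauss.memLp_two hs) (hgauss.memLp_two ht), hgauss.integral_eq_zero hs,
    zero_mul, sub_zero]
  exact hcov s t hs ht

lemma IsFBM.integral_sq (hB : IsFBM μ H B) (hH : 0 < H) {t : ℝ} (ht : 0 ≤ t) :
    ∫ ω, B t ω ^ 2 ∂μ = t ^ (2 * H) := by
  simp only [sq, hB.2.2.2 t t ht ht, sub_self, abs_zero, zero_rpow (mul_pos two_pos hH).ne']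
  ring

lemma IsFBM.variance_eq (hB : IsFBM μ H B) (hH : 0 < H) {t : ℝ} (ht : 0 ≤ t) :
    Var[B t; μ] = t ^ (2 * H) := by
  rw [variance_of_integral_eq_zero (hB.1.1 t ht).aemeasurable (hB.1.integral_eq_zero ht),
    hB.integral_sq hH ht]

lemma IsFBM.variance_sub [IsProbabilityMeasure μ] (hB : IsFBM μ H B) (hH : 0 < H) {s t : ℝ}
    (hs : 0 ≤ s) (ht : 0 ≤ t) : Var[B s - B t; μ] = |s - t| ^ (2 * H) := by
  rw [ProbabilityTheory.variance_sub (hB.1.memLp_two hs) (hB.1.memLp_two ht),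
    hB.variance_eq hH hs, hB.variance_eq hH ht, hB.covariance_eq hs ht, abs_sub_comm]
  ring

lemma IsFBM.integral_abs_le_one [IsProbabilityMeasure μ] (hB : IsFBM μ H B) (hH : 0 < H) {t : ℝ}
    (ht : t ∈ Icc 0 1) : ∫ ω, |B t ω| ∂μ ≤ 1 := by
  have hL2 := hB.1.memLp_two ht.1
  have hamgm ω : |B t ω| ≤ (1 + B t ω ^ 2) / 2 := by
    nlinarith [sq_nonneg (|B t ω| - 1), sq_abs (B t ω)]
  calc ∫ ω, |B t ω| ∂μ ≤ ∫ ω, (1 + B t ω ^ 2) / 2 ∂μ :=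
        integral_mono (hL2.integrable one_le_two).abs
          (((integrable_const 1).add hL2.integrable_sq).div_const 2) hamgm
    _ = (1 + t ^ (2 * H)) / 2 := by
        rw [integral_div, integral_add (integrable_const 1) hL2.integrable_sq,
          hB.integral_sq hH ht.1, integral_const, probReal_univ, one_smul]
    _ ≤ 1 := by
        linarith [rpow_le_one ht.1 ht.2 (mul_pos two_pos hH).le]

lemma grid_mem_Icc {n : ℕ} (i : Fin (n + 1)) : (i : ℝ) / n ∈ Icc (0 : ℝ) 1 :=
  ⟨by positivity, div_le_one_of_le₀ (Nat.cast_le.2 i.is_le) n.cast_nonneg⟩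

lemma IsFBM.abs_expMaxGrid_le [IsProbabilityMeasure μ] (hB : IsFBM μ H B) (hH : 0 < H) (n : ℕ) :
    |expMaxGrid μ B n| ≤ n + 1 := by
  calc |expMaxGrid μ B n| ≤ ∑ i : Fin (n + 1), ∫ ω, |B (i / n) ω| ∂μ :=
        abs_integral_ciSup_le fun i ↦
          (hB.1.memLp_two (grid_mem_Icc i).1).integrable one_le_two
    _ ≤ ∑ _i : Fin (n + 1), (1 : ℝ) :=
        Finset.sum_le_sum fun i _ ↦ hB.integral_abs_le_one hH (grid_mem_Icc i)
    _ = n + 1 := by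
        simp only [Finset.sum_const, Finset.card_fin, nsmul_one, Nat.cast_add, Nat.cast_one]

lemma exists_separated_grid_points {m n : ℕ} (hm : 0 < m) (hmn : m ≤ n) :
    ∃ p : Fin m → Fin (n + 1), ∀ i j, i ≠ j →
      1 / (2 * m : ℝ) ≤ |(p i : ℝ) / n - (p j : ℝ) / n| := by
  obtain ⟨d, hd, hdn, hnd⟩ : ∃ d, 0 < d ∧ m * d ≤ n ∧ n < m * (d + 1) :=
    ⟨n / m, Nat.div_pos hmn hm, Nat.mul_div_le n m, Nat.lt_mul_div_succ n hm⟩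
  have hlt (j : Fin m) : j * d < n + 1 :=
    Nat.lt_succ_of_le ((Nat.mul_le_mul_right d j.is_lt.le).trans hdn)
  refine ⟨fun j ↦ ⟨j * d, hlt j⟩, fun i j hij ↦ ?_⟩
  have hn : (0 : ℝ) < n := Nat.cast_pos.2 (hm.trans_le hmn)
  have hn_le : (n : ℝ) ≤ 2 * m * d := by
    have : n ≤ 2 * m * d := by nlinarith
    exact_mod_cast this
  have hone : (1 : ℝ) ≤ |(i : ℝ) - j| := by
    have : (i : ℤ) - j ≠ 0 := sub_ne_zero.2 (Nat.cast_injective.ne (Fin.val_ne_of_ne hij))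
    exact_mod_cast Int.one_le_abs this
  have hdiff : ((i * d : ℕ) : ℝ) / n - ((j * d : ℕ) : ℝ) / n = (i - j) * (d / n) := by
    push_cast
    ring
  calc 1 / (2 * m : ℝ) ≤ d / n := by
        rw [div_le_div_iff₀ (by positivity) hn]
        linarith
    _ ≤ |(i : ℝ) - j| * (d / n) := le_mul_of_one_le_left (by positivity) hone
    _ = |((i * d : ℕ) : ℝ) / n - ((j * d : ℕ) : ℝ) / n| := by
        rw [hdiff, abs_mul, abs_of_nonneg (by positivity : (0 : ℝ) ≤ d / n)]

lemma exists_forall_le_expMaxGrid (μ : Measure Ω) [IsProbabilityMeasure μ] (R : ℝ) :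
    ∃ m : ℕ, ∀ᶠ H in 𝓝[>] 0, ∀ n ≥ m, ∀ B, IsFBM μ H B → R ≤ expMaxGrid μ B n := by
  obtain ⟨m, hm, hm0⟩ :=
    ((eventually_le_integral_of_nearly_equilateral μ R).and (eventually_gt_atTop 0)).exists
  refine ⟨m, ?_⟩
  have hlim : Tendsto (fun H : ℝ ↦ (1 / (2 * m : ℝ)) ^ (2 * H)) (𝓝[>] 0) (𝓝 1) := by
    have hcont : Continuous fun H : ℝ ↦ (1 / (2 * m : ℝ)) ^ (2 * H) :=
      continuous_const.rpow (by fun_prop) fun _ ↦ .inl (by positivity)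
    exact (hcont.tendsto' 0 1 (by simp)).mono_left nhdsWithin_le_nhds
  have hlt : 1 - 1 / (m : ℝ) < 1 := sub_lt_self _ (by positivity)
  filter_upwards [self_mem_nhdsWithin, hlim.eventually (lt_mem_nhds hlt)] with H hH hHm n hmn B hB
  obtain ⟨p, hp⟩ := exists_separated_grid_points hm0 hmn
  have hH0 : 0 ≤ 2 * H := (mul_pos two_pos hH).le
  have hp01 i := grid_mem_Icc (p i)
  have hvar i j : Var[B (p i / n) - B (p j / n); μ] = |(p i : ℝ) / n - (p j : ℝ) / n| ^ (2 * H) :=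
    hB.variance_sub hH (hp01 i).1 (hp01 j).1
  refine hm (fun i ↦ B (p i / n)) _ (hB.1.hasGaussianLaw fun i ↦ (hp01 i).1)
    (fun i ↦ hB.1.integral_eq_zero (hp01 i).1) (fun i j ↦ ?_) (fun i j hij ↦ ?_)
    (integrable_ciSup fun i ↦ (hB.1.memLp_two (grid_mem_Icc i).1).integrable one_le_two)
    fun i ω ↦ ?_
  · rw [hvar]
    exact rpow_le_one (abs_nonneg _)
      (abs_le.2 ⟨by linarith [(hp01 i).1, (hp01 j).2], by linarith [(hp01 i).2, (hp01 j).1]⟩) hH0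
  · rw [hvar]
    exact hHm.le.trans (rpow_le_rpow (by positivity) (hp i j hij) hH0)
  · exact le_ciSup (f := fun i : Fin (n + 1) ↦ B (i / n) ω) (finite_range _).bddAbove (p i)

end FractionalBrownianMotion

/-- for sequences `H_k → 0` in `(0,1)` and integers `n_k ≥ 1`, the sequence
`f_k = f(H_k, n_k)` is bounded if and only if `(n_k)` is bounded. -/
theorem stmt11 {Ω : Type} [MeasurableSpace Ω] (μ : Measure Ω) [IsProbabilityMeasure μ]
    (H : ℕ → ℝ) (hH : ∀ k, H k ∈ Ioo (0:ℝ) 1) (hHlim : Tendsto H atTop (𝓝 0))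
    (n : ℕ → ℕ) (hn : ∀ k, 1 ≤ n k)
    (B : ℕ → ℝ → Ω → ℝ) (hB : ∀ k, IsFBM μ (H k) (B k)) :
    (∃ M : ℝ, ∀ k, |expMaxGrid μ (B k) (n k)| ≤ M) ↔ (∃ N : ℕ, ∀ k, n k ≤ N) := by
  constructor
  · rintro ⟨M, hM⟩
    obtain ⟨m, hm⟩ := exists_forall_le_expMaxGrid μ (M + 1)
    have hHlim' : Tendsto H atTop (𝓝[>] 0) :=
      tendsto_nhdsWithin_iff.2 ⟨hHlim, .of_forall fun k ↦ (hH k).1⟩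
    have hbdd : ∀ᶠ k in atTop, n k ≤ m := by
      filter_upwards [hHlim'.eventually hm] with k hk
      by_contra! hlt
      linarith [hk (n k) hlt.le (B k) (hB k), le_of_abs_le (hM k)]
    obtain ⟨N, hN⟩ := (isBoundedUnder_of_eventually_le hbdd).bddAbove_range
    exact ⟨N, forall_mem_range.1 hN⟩
  · rintro ⟨N, hN⟩
    refine ⟨N + 1, fun k ↦ ((hB k).abs_expMaxGrid_le (hH k).1 (n k)).trans ?_⟩
    gcongr
    exact hN k
end
end

section
/- Let X = (X_t)_{t∈[0,1]} be a centered Gaussian process such that ‖X_t − X_s‖₂ ≥ C|t−s|^H for all t, s ∈ [0,1], with constants C > 0 and H ∈ (0,1). Then for every integer n ≥ 1, E[max_{0≤i≤n} X_{i/n}] ≥ C·n^{−H}·√(log₂(n+1)/(2π)). -/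
open MeasureTheory ProbabilityTheory Real Set Filter Topology

noncomputable section

/-!
Rotating an independent copy of one Gaussian family into the other, `sin θ • X + cos θ • Y`,
Gaussian integration by parts shows that the expectation of `logSumExp` is monotone in `θ` as soon
as the increments of `X` have larger variances than those of `Y`. Rescaling turns this into the
Sudakov–Fernique inequality for expected maxima. Distinct grid values differ by at least
`C * n ^ (-H)` in `L²`, so it bounds the expected maximum of the grid values below by
`C * n ^ (-H) / √2` times the expected maximum `G N` of `N = n + 1` independent standard Gaussian
variables, and `logb 2 N ≤ π * G N ^ 2` remains to be shown.

The same inequality, applied to `a * X i + b * Y j` for independent standard families `X`, `Y` of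
sizes `M`, `N`, gives `a * G M + b * G N ≤ √(a ^ 2 + b ^ 2) * G (M * N)`, hence
`G M ^ 2 + G N ^ 2 ≤ G (M * N) ^ 2`: like the logarithm, `G ^ 2` is superadditive, so only small `N`
matter. These follow by integrating `∑ i, ∑ j, |x i - x j| ≤ ⌊N ^ 2 / 2⌋ * (max x - min x)`, where
`|x i - x j|` has mean `2 / √π` for `i ≠ j`; by convexity it suffices to check this bound when every
`x i` is an endpoint of the range.
-/

section GaussianIntegrationByParts

theorem hasDerivAt_gaussianPDFReal (m : ℝ) (v : NNReal) (x : ℝ) :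
    HasDerivAt (gaussianPDFReal m v) (-((x - m) / v) * gaussianPDFReal m v x) x := by
  have h : HasDerivAt (fun x : ℝ ↦ -(x - m) ^ 2 / (2 * v)) (-((x - m) / v)) x :=
    ((((hasDerivAt_id x).sub_const m).pow 2).neg.div_const (2 * (v : ℝ))).congr_deriv <| by
      simp only [Nat.cast_ofNat, id_eq, Nat.add_one_sub_one, pow_one, mul_one]
      field_simp
  refine (h.exp.const_mul (√(2 * π * v))⁻¹).congr_deriv ?_
  simp only [gaussianPDFReal]
  ring

theorem integrable_id_mul_gaussianPDFReal (m : ℝ) (v : NNReal) :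
    Integrable fun x ↦ x * gaussianPDFReal m v x := by
  rcases eq_or_ne v 0 with rfl | hv
  · simp
  have h := (memLp_id_gaussianReal (μ := m) (v := v) 1).integrable le_rfl
  rw [gaussianReal_of_var_ne_zero _ hv, gaussianPDF_def,
    integrable_withDensity_iff (by fun_prop) (by simp)] at h
  simpa [gaussianPDFReal_nonneg] using h

theorem integral_id_mul_gaussianReal {v : NNReal} {f f' : ℝ → ℝ} {M M' : ℝ}
    (hf : ∀ x, HasDerivAt f (f' x) x) (hf' : Continuous f')
    (hM : ∀ x, |f x| ≤ M) (hM' : ∀ x, |f' x| ≤ M') :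
    ∫ x, x * f x ∂gaussianReal 0 v = v * ∫ x, f' x ∂gaussianReal 0 v := by
  rcases eq_or_ne v 0 with rfl | hv
  · simp
  have hfc : Continuous f := continuous_iff_continuousAt.2 fun x ↦ (hf x).continuousAt
  have hpdf (x : ℝ) : HasDerivAt (fun x ↦ -(v * gaussianPDFReal 0 v x))
      (x * gaussianPDFReal 0 v x) x := by
    refine ((hasDerivAt_gaussianPDFReal 0 v x).const_mul (v : ℝ)).neg.congr_deriv ?_
    field_simp
    ring
  have hint : Integrable (fun x ↦ v * gaussianPDFReal 0 v x) :=
    (integrable_gaussianPDFReal 0 v).const_mul _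
  have hparts := integral_mul_deriv_eq_deriv_mul_of_integrable (fun x _ ↦ hf x) (fun x _ ↦ hpdf x)
    ((integrable_id_mul_gaussianPDFReal 0 v).bdd_mul hfc.aestronglyMeasurable (ae_of_all _ hM))
    (hint.neg.bdd_mul hf'.aestronglyMeasurable (ae_of_all _ hM'))
    (hint.neg.bdd_mul hfc.aestronglyMeasurable (ae_of_all _ hM))
  simp only [integral_gaussianReal_eq_integral_smul hv, smul_eq_mul]
  calc ∫ x, gaussianPDFReal 0 v x * (x * f x) = ∫ x, f x * (x * gaussianPDFReal 0 v x) := by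
        congr 1 with x
        ring
    _ = v * ∫ x, gaussianPDFReal 0 v x * f' x := by
        rw [hparts, ← integral_neg, ← integral_const_mul]
        congr 1 with x
        ring

variable {Ω : Type*} [MeasurableSpace Ω] {P : Measure Ω}

theorem integral_mul_comp_add_smul_of_indepFun {E : Type*} [NormedAddCommGroup E]
    [NormedSpace ℝ E] [MeasurableSpace E] [BorelSpace E] [SecondCountableTopology E]
    {W : Ω → ℝ} {R : Ω → E} {v : NNReal} (hW : HasLaw W (gaussianReal 0 v) P)
    (hR : AEMeasurable R P) (hWR : IndepFun W R P) {F : E → ℝ} {F' : E → E →L[ℝ] ℝ} {M M' : ℝ}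
    (hF : ∀ z, HasFDerivAt F (F' z) z) (hF' : Continuous F')
    (hM : ∀ z, |F z| ≤ M) (hM' : ∀ z, ‖F' z‖ ≤ M') (k : E) :
    ∫ ω, W ω * F (R ω + W ω • k) ∂P = v * ∫ ω, F' (R ω + W ω • k) k ∂P := by
  have := hW.isProbabilityMeasure
  have := Measure.isProbabilityMeasure_map hR
  have hprod := (indepFun_iff_hasLaw_prodMk_prod hW ⟨hR, rfl⟩).1 hWR
  have hFc : Continuous F := continuous_iff_continuousAt.2 fun z ↦ (hF z).continuousAt
  have hbound (z : E) : |F' z k| ≤ M' * ‖k‖ :=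
    ((F' z).le_opNorm k).trans (mul_le_mul_of_nonneg_right (hM' z) (norm_nonneg k))
  have hline (r : E) (w : ℝ) :
      HasDerivAt (fun w ↦ F (r + w • k)) (F' (r + w • k) k) w := by
    have h : HasDerivAt (fun w : ℝ ↦ r + w • k) k w := by
      simpa using ((hasDerivAt_id w).smul_const k).const_add r
    exact (hF _).comp_hasDerivAt w h
  have hIF : Integrable (fun p : ℝ × E ↦ p.1 * F (p.2 + p.1 • k))
      ((gaussianReal 0 v).prod (P.map R)) :=
    (((memLp_id_gaussianReal 1).integrable le_rfl).comp_fst _).mul_bdd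
      (by fun_prop) (ae_of_all _ fun p ↦ hM _)
  have hIF' : Integrable (fun p : ℝ × E ↦ F' (p.2 + p.1 • k) k)
      ((gaussianReal 0 v).prod (P.map R)) :=
    .of_bound (by fun_prop) _ (ae_of_all _ fun p ↦ hbound _)
  calc ∫ ω, W ω * F (R ω + W ω • k) ∂P
      = ∫ p, p.1 * F (p.2 + p.1 • k) ∂(gaussianReal 0 v).prod (P.map R) :=
        hprod.integral_comp hIF.aestronglyMeasurable
    _ = ∫ r, ∫ w, w * F (r + w • k) ∂gaussianReal 0 v ∂P.map R := integral_prod_symm _ hIF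
    _ = ∫ r, v * ∫ w, F' (r + w • k) k ∂gaussianReal 0 v ∂P.map R := by
        congr 1 with r
        exact integral_id_mul_gaussianReal (hline r) (by fun_prop) (fun w ↦ hM _)
          fun w ↦ hbound _
    _ = v * ∫ p, F' (p.2 + p.1 • k) k ∂(gaussianReal 0 v).prod (P.map R) := by
        rw [integral_const_mul, integral_prod_symm _ hIF']
    _ = v * ∫ ω, F' (R ω + W ω • k) k ∂P := by
        rw [← hprod.integral_comp hIF'.aestronglyMeasurable]
        rfl

theorem variance_mul_covariance_div_variance [IsFiniteMeasure P] {W Z : Ω → ℝ}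
    (hW : MemLp W 2 P) : Var[W; P] * (cov[W, Z; P] / Var[W; P]) = cov[W, Z; P] := by
  refine mul_div_cancel_of_imp' fun hv ↦ integral_eq_zero_of_ae ?_
  filter_upwards [ae_eq_integral_of_variance_eq_zero hW hv] with ω hω
  simp [hω]

variable {ι : Type*} {W : Ω → ℝ} {Z : ι → Ω → ℝ}

theorem indepFun_sub_covariance_div_variance_mul [Finite ι]
    (h : HasGaussianLaw (fun ω ↦ (W ω, fun i ↦ Z i ω)) P) :
    IndepFun W (fun ω i ↦ Z i ω - cov[W, Z i; P] / Var[W; P] * W ω) P := by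
  have := h.isProbabilityMeasure
  have := Fintype.ofFinite ι
  have hW : MemLp W 2 P := h.fst.memLp_two
  have hZ (i : ι) : MemLp (Z i) 2 P := (h.snd.eval i).memLp_two
  let R (i : ι) (ω : Ω) : ℝ := Z i ω - cov[W, Z i; P] / Var[W; P] * W ω
  let L : (ℝ × (ι → ℝ)) →L[ℝ] ((Unit → ℝ) × (ι → ℝ)) :=
    (ContinuousLinearMap.pi fun _ ↦ ContinuousLinearMap.fst ℝ ℝ (ι → ℝ)).prod
      (ContinuousLinearMap.pi fun i ↦
        (ContinuousLinearMap.proj i).comp (ContinuousLinearMap.snd ℝ ℝ (ι → ℝ)) -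
          (cov[W, Z i; P] / Var[W; P]) • ContinuousLinearMap.fst ℝ ℝ (ι → ℝ))
  have hWR : HasGaussianLaw (fun ω ↦ ((fun _ : Unit ↦ W ω), fun i ↦ R i ω)) P := h.map_fun L
  have hcov (i : ι) : cov[W, R i; P] = 0 := by
    rw [covariance_fun_sub_right hW (hZ i) (hW.const_mul _), covariance_const_mul_right,
      covariance_self h.fst.aemeasurable, mul_comm, variance_mul_covariance_div_variance hW,
      sub_self]
  exact (hWR.indepFun_of_covariance_eval (X := fun _ ↦ W) fun _ ↦ hcov).comp
    (measurable_pi_apply ()) measurable_id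

theorem integral_mul_comp_eq_integral_fderiv_covariance [Fintype ι]
    (h : HasGaussianLaw (fun ω ↦ (W ω, fun i ↦ Z i ω)) P) (hW : ∫ ω, W ω ∂P = 0)
    {F : (ι → ℝ) → ℝ} {F' : (ι → ℝ) → (ι → ℝ) →L[ℝ] ℝ} {M M' : ℝ}
    (hF : ∀ z, HasFDerivAt F (F' z) z) (hF' : Continuous F')
    (hM : ∀ z, |F z| ≤ M) (hM' : ∀ z, ‖F' z‖ ≤ M') :
    ∫ ω, W ω * F (fun i ↦ Z i ω) ∂P =
      ∫ ω, F' (fun i ↦ Z i ω) (fun i ↦ cov[W, Z i; P]) ∂P := by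
  have := h.isProbabilityMeasure
  have hlaw : HasLaw W (gaussianReal 0 Var[W; P].toNNReal) P :=
    ⟨h.fst.aemeasurable, by rw [h.fst.map_eq_gaussianReal, hW]⟩
  let k (i : ι) : ℝ := cov[W, Z i; P] / Var[W; P]
  let R (ω : Ω) (i : ι) : ℝ := Z i ω - k i * W ω
  have hR : AEMeasurable R P := aemeasurable_pi_lambda _ fun i ↦
    (h.snd.eval i).aemeasurable.sub (h.fst.aemeasurable.const_mul _)
  have hZ (ω : Ω) : R ω + W ω • k = fun i ↦ Z i ω := by
    ext i
    simp only [R, Pi.add_apply, Pi.smul_apply, smul_eq_mul]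
    ring
  have hk : Var[W; P] • k = fun i ↦ cov[W, Z i; P] :=
    funext fun i ↦ variance_mul_covariance_div_variance h.fst.memLp_two
  have hparts := integral_mul_comp_add_smul_of_indepFun hlaw hR
    (indepFun_sub_covariance_div_variance_mul h) hF hF' hM hM' k
  simp only [hZ, coe_toNNReal _ (variance_nonneg W P)] at hparts
  simp_rw [hparts, ← integral_const_mul, ← smul_eq_mul, ← map_smul, hk]

end GaussianIntegrationByParts

section LogSumExp

variable {ι : Type*} [Fintype ι]

/-- The log-sum-exp function `log (∑ i, exp (x i))`, the smooth maximum used in the Gaussian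
comparison inequality. -/
def logSumExp (x : ι → ℝ) : ℝ := log (∑ i, exp (x i))

/-- The `i`-th softmax weight of `x`, i.e. the `i`-th partial derivative of `logSumExp` at `x`. -/
def softmax (i : ι) (x : ι → ℝ) : ℝ := exp (x i) / ∑ j, exp (x j)

theorem softmax_nonneg (i : ι) (x : ι → ℝ) : 0 ≤ softmax i x := by
  unfold softmax
  positivity

variable [Nonempty ι]

theorem sum_exp_pos (x : ι → ℝ) : 0 < ∑ i, exp (x i) :=
  Finset.sum_pos (fun _ _ ↦ exp_pos _) Finset.univ_nonempty

theorem sum_softmax (x : ι → ℝ) : ∑ i, softmax i x = 1 := by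
  simp only [softmax, ← Finset.sum_div]
  exact div_self (sum_exp_pos x).ne'

theorem softmax_le_one (i : ι) (x : ι → ℝ) : softmax i x ≤ 1 :=
  sum_softmax x ▸ Finset.single_le_sum (fun j _ ↦ softmax_nonneg j x) (Finset.mem_univ i)

theorem abs_softmax_le_one (i : ι) (x : ι → ℝ) : |softmax i x| ≤ 1 :=
  abs_le.2 ⟨by linarith [softmax_nonneg i x], softmax_le_one i x⟩

@[fun_prop]
theorem continuous_softmax (i : ι) : Continuous (softmax i : (ι → ℝ) → ℝ) :=
  Continuous.div (by fun_prop) (by fun_prop) fun x ↦ (sum_exp_pos x).ne'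

@[fun_prop]
theorem continuous_logSumExp : Continuous (logSumExp : (ι → ℝ) → ℝ) :=
  Continuous.log (by fun_prop) fun x ↦ (sum_exp_pos x).ne'

theorem softmax_eq_exp_sub_logSumExp (i : ι) (x : ι → ℝ) :
    softmax i x = exp (x i - logSumExp x) := by
  rw [exp_sub, logSumExp, exp_log (sum_exp_pos x), softmax]

theorem hasFDerivAt_logSumExp (x : ι → ℝ) :
    HasFDerivAt logSumExp
      (∑ i, softmax i x • ContinuousLinearMap.proj (R := ℝ) (φ := fun _ : ι ↦ ℝ) i) x := by
  have h := (HasFDerivAt.fun_sum (u := Finset.univ)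
    fun i _ ↦ (hasFDerivAt_apply (𝕜 := ℝ) i x).exp).log (sum_exp_pos x).ne'
  refine h.congr_fderiv ?_
  simp only [Finset.smul_sum, smul_smul, softmax, div_eq_inv_mul]

theorem hasFDerivAt_softmax (i : ι) (x : ι → ℝ) :
    HasFDerivAt (softmax i)
      (softmax i x • (ContinuousLinearMap.proj (R := ℝ) (φ := fun _ : ι ↦ ℝ) i -
        ∑ j, softmax j x • ContinuousLinearMap.proj j)) x := by
  have h := ((hasFDerivAt_apply (𝕜 := ℝ) i x).sub (hasFDerivAt_logSumExp x)).exp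
  rw [funext (softmax_eq_exp_sub_logSumExp i)]
  exact h

theorem norm_fderiv_softmax_le (i : ι) (x : ι → ℝ) :
    ‖softmax i x • (ContinuousLinearMap.proj (R := ℝ) (φ := fun _ : ι ↦ ℝ) i -
      ∑ j, softmax j x • ContinuousLinearMap.proj j)‖ ≤ 2 := by
  refine ContinuousLinearMap.opNorm_le_bound _ zero_le_two fun y ↦ ?_
  have hmean : |∑ j, softmax j x * y j| ≤ ‖y‖ := calc
    |∑ j, softmax j x * y j| ≤ ∑ j, softmax j x * ‖y‖ := by
      refine (Finset.abs_sum_le_sum_abs _ _).trans (Finset.sum_le_sum fun j _ ↦ ?_)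
      rw [abs_mul, abs_of_nonneg (softmax_nonneg j x)]
      exact mul_le_mul_of_nonneg_left (norm_le_pi_norm y j) (softmax_nonneg j x)
    _ = ‖y‖ := by rw [← Finset.sum_mul, sum_softmax, one_mul]
  calc |softmax i x * (y i - (∑ j, softmax j x • ContinuousLinearMap.proj (R := ℝ) j) y)|
      ≤ |y i - ∑ j, softmax j x * y j| := by
        rw [abs_mul]
        simpa using mul_le_of_le_one_left (abs_nonneg _) (abs_softmax_le_one i x)
    _ ≤ 2 * ‖y‖ := by linarith [abs_sub (y i) (∑ j, softmax j x * y j), norm_le_pi_norm y i,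
        Real.norm_eq_abs (y i)]

theorem le_logSumExp (i : ι) (x : ι → ℝ) : x i ≤ logSumExp x := by
  rw [logSumExp, le_log_iff_exp_le (sum_exp_pos x)]
  exact Finset.single_le_sum (fun j _ ↦ (exp_pos (x j)).le) (Finset.mem_univ i)

theorem logSumExp_le {x : ι → ℝ} {m : ℝ} (h : ∀ i, x i ≤ m) :
    logSumExp x ≤ m + log (Fintype.card ι) := by
  have hcard : (0 : ℝ) < Fintype.card ι := by exact_mod_cast Fintype.card_pos
  rw [logSumExp, log_le_iff_le_exp (sum_exp_pos x), exp_add, exp_log hcard]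
  calc ∑ i, exp (x i) ≤ ∑ _i : ι, exp m := Finset.sum_le_sum fun i _ ↦ exp_le_exp.2 (h i)
    _ = exp m * Fintype.card ι := by simp [mul_comm]

theorem abs_logSumExp_le (x : ι → ℝ) :
    |logSumExp x| ≤ ∑ i, |x i| + log (Fintype.card ι) := by
  have hle (i : ι) : |x i| ≤ ∑ i, |x i| :=
    Finset.single_le_sum (fun j _ ↦ abs_nonneg (x j)) (Finset.mem_univ i)
  have hlog : 0 ≤ log (Fintype.card ι) := log_natCast_nonneg _
  have i := Classical.arbitrary ι
  refine abs_le.2 ⟨?_, logSumExp_le fun i ↦ (le_abs_self _).trans (hle i)⟩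
  linarith [le_logSumExp i x, neg_abs_le (x i), hle i]

variable {Ω : Type*} [MeasurableSpace Ω] {P : Measure Ω} [IsFiniteMeasure P]

theorem integrable_logSumExp {X : ι → Ω → ℝ} (hX : ∀ i, Integrable (X i) P) :
    Integrable (fun ω ↦ logSumExp fun i ↦ X i ω) P := by
  refine ((integrable_finsetSum _ fun i _ ↦ (hX i).abs).add (integrable_const _)).mono'
    ?_ (ae_of_all _ fun ω ↦ abs_logSumExp_le _)
  exact (continuous_logSumExp.measurable.comp_aemeasurable
    (aemeasurable_pi_lambda _ fun i ↦ (hX i).aemeasurable)).aestronglyMeasurable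

theorem hasDerivAt_integral_logSumExp_rotation {X Y : ι → Ω → ℝ}
    (hX : ∀ i, Integrable (X i) P) (hY : ∀ i, Integrable (Y i) P) (θ : ℝ) :
    HasDerivAt (fun θ ↦ ∫ ω, logSumExp (fun i ↦ sin θ * X i ω + cos θ * Y i ω) ∂P)
      (∫ ω, ∑ i, (cos θ * X i ω - sin θ * Y i ω) *
        softmax i (fun j ↦ sin θ * X j ω + cos θ * Y j ω) ∂P) θ := by
  have hZ (θ : ℝ) (i : ι) : Integrable (fun ω ↦ sin θ * X i ω + cos θ * Y i ω) P :=
    ((hX i).const_mul _).add ((hY i).const_mul _)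
  have hZ' (θ : ℝ) (i : ι) (ω : Ω) : HasDerivAt (fun θ ↦ sin θ * X i ω + cos θ * Y i ω)
      (cos θ * X i ω - sin θ * Y i ω) θ :=
    (((hasDerivAt_sin θ).mul_const _).add ((hasDerivAt_cos θ).mul_const _)).congr_deriv (by ring)
  have hbound (θ : ℝ) (ω : Ω) : ‖∑ i, (cos θ * X i ω - sin θ * Y i ω) *
      softmax i (fun j ↦ sin θ * X j ω + cos θ * Y j ω)‖ ≤ ∑ i, (|X i ω| + |Y i ω|) := by
    refine (Finset.abs_sum_le_sum_abs _ _).trans (Finset.sum_le_sum fun i _ ↦ ?_)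
    rw [abs_mul]
    refine (mul_le_of_le_one_right (abs_nonneg _) (abs_softmax_le_one _ _)).trans
      ((abs_sub _ _).trans (add_le_add ?_ ?_))
    · rw [abs_mul]
      exact mul_le_of_le_one_left (abs_nonneg _) (abs_cos_le_one _)
    · rw [abs_mul]
      exact mul_le_of_le_one_left (abs_nonneg _) (abs_sin_le_one _)
  have hmeas : AEStronglyMeasurable (fun ω ↦ ∑ i, (cos θ * X i ω - sin θ * Y i ω) *
      softmax i (fun j ↦ sin θ * X j ω + cos θ * Y j ω)) P := by
    refine (Finset.aemeasurable_fun_sum _ fun i _ ↦ AEMeasurable.mul ?_ ?_).aestronglyMeasurable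
    · exact ((hX i).aemeasurable.const_mul _).sub ((hY i).aemeasurable.const_mul _)
    · exact (continuous_softmax i).measurable.comp_aemeasurable
        (aemeasurable_pi_lambda _ fun j ↦ (hZ θ j).aemeasurable)
  refine (hasDerivAt_integral_of_dominated_loc_of_deriv_le univ_mem
    (Eventually.of_forall fun θ ↦ (integrable_logSumExp (hZ θ)).aestronglyMeasurable)
    (integrable_logSumExp (hZ θ)) hmeas (ae_of_all _ fun ω θ _ ↦ hbound θ ω)
    (integrable_finsetSum _ fun i _ ↦ (hX i).abs.add (hY i).abs)
    (ae_of_all _ fun ω θ _ ↦ ?_)).2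
  refine ((hasFDerivAt_logSumExp _).comp_hasDerivAt θ
    (hasDerivAt_pi.2 fun i ↦ hZ' θ i ω)).congr_deriv ?_
  simp [mul_comm]

end LogSumExp

section SudakovFernique

variable {Ω : Type*} [MeasurableSpace Ω] {P : Measure Ω} {ι : Type*}

theorem sum_mul_sub_sum_mul [Fintype ι] {p : ι → ℝ} (hp : ∑ i, p i = 1) (D : ι → ι → ℝ) :
    ∑ i, p i * (D i i - ∑ j, p j * D i j) =
      (∑ i, ∑ j, p i * p j * (D i i + D j j - D i j - D j i)) / 2 := by
  have hdiag : ∑ i, p i * D i i = ∑ i, ∑ j, p i * p j * D i i :=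
    Finset.sum_congr rfl fun i _ ↦ by rw [← Finset.sum_mul, ← Finset.mul_sum, hp, mul_one]
  have hdiag' : ∑ i, p i * D i i = ∑ i, ∑ j, p i * p j * D j j := by
    rw [hdiag, Finset.sum_comm]
    simp only [mul_comm]
  have hoff : ∑ i, ∑ j, p i * p j * D i j = ∑ i, ∑ j, p i * p j * D j i := by
    rw [Finset.sum_comm]
    simp only [mul_comm]
  simp only [mul_sub, mul_add, Finset.mul_sum, ← mul_assoc, Finset.sum_sub_distrib,
    Finset.sum_add_distrib]
  rw [← hdiag, ← hdiag', ← hoff]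
  ring

theorem integral_sum_mul_softmax_nonneg [Fintype ι] [Nonempty ι] {W Z : ι → Ω → ℝ}
    (h : HasGaussianLaw (fun ω ↦ (fun i ↦ W i ω, fun i ↦ Z i ω)) P)
    (hW : ∀ i, ∫ ω, W i ω ∂P = 0)
    (hcov : ∀ i j, 0 ≤ cov[fun ω ↦ W i ω - W j ω, fun ω ↦ Z i ω - Z j ω; P]) :
    0 ≤ ∫ ω, ∑ i, W i ω * softmax i (fun j ↦ Z j ω) ∂P := by
  have := h.isProbabilityMeasure
  have hW2 (i : ι) : MemLp (W i) 2 P := (h.fst.eval i).memLp_two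
  have hZ2 (i : ι) : MemLp (Z i) 2 P := (h.snd.eval i).memLp_two
  let D (i j : ι) : ℝ := cov[W i, Z j; P]
  let H (i : ι) (z : ι → ℝ) : ℝ := softmax i z * (D i i - ∑ j, softmax j z * D i j)
  have hWZ (i : ι) : HasGaussianLaw (fun ω ↦ (W i ω, fun j ↦ Z j ω)) P :=
    h.map_fun (((ContinuousLinearMap.proj i).comp (ContinuousLinearMap.fst ℝ (ι → ℝ) (ι → ℝ))).prod
      (ContinuousLinearMap.snd ℝ (ι → ℝ) (ι → ℝ)))
  have hparts (i : ι) : ∫ ω, W i ω * softmax i (fun j ↦ Z j ω) ∂P =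
      ∫ ω, H i (fun j ↦ Z j ω) ∂P := by
    simpa [H, D] using integral_mul_comp_eq_integral_fderiv_covariance (hWZ i) (hW i)
      (hasFDerivAt_softmax i) (by fun_prop) (abs_softmax_le_one i) (norm_fderiv_softmax_le i)
  have hWint (i : ι) : Integrable (fun ω ↦ W i ω * softmax i (fun j ↦ Z j ω)) P :=
    (h.fst.eval i).integrable.mul_bdd
      ((continuous_softmax i).measurable.comp_aemeasurable h.snd.aemeasurable).aestronglyMeasurable
      (ae_of_all _ fun ω ↦ abs_softmax_le_one _ _)
  have hHle (i : ι) (z : ι → ℝ) : |H i z| ≤ 2 * ‖D i‖ := by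
    simpa [H] using (ContinuousLinearMap.le_opNorm _ (D i)).trans
      (mul_le_mul_of_nonneg_right (norm_fderiv_softmax_le i z) (norm_nonneg _))
  have hHint (i : ι) : Integrable (fun ω ↦ H i (fun j ↦ Z j ω)) P := by
    have hHc : Continuous (H i) := by fun_prop
    exact .of_bound (hHc.measurable.comp_aemeasurable h.snd.aemeasurable).aestronglyMeasurable _
      (ae_of_all _ fun ω ↦ hHle i _)
  calc 0 ≤ ∫ ω, ∑ i, H i (fun j ↦ Z j ω) ∂P := integral_nonneg fun ω ↦ by
        simp only [H, Pi.zero_apply, sum_mul_sub_sum_mul (sum_softmax _)]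
        refine div_nonneg (Finset.sum_nonneg fun i _ ↦ Finset.sum_nonneg fun j _ ↦
          mul_nonneg (mul_nonneg (softmax_nonneg _ _) (softmax_nonneg _ _)) ?_) zero_le_two
        have := hcov i j
        rw [covariance_fun_sub_fun_sub (hW2 i) (hW2 j) (hZ2 i) (hZ2 j)] at this
        linarith
    _ = ∫ ω, ∑ i, W i ω * softmax i (fun j ↦ Z j ω) ∂P := by
        rw [integral_finsetSum _ fun i _ ↦ hHint i, integral_finsetSum _ fun i _ ↦ hWint i]
        exact Finset.sum_congr rfl fun i _ ↦ (hparts i).symm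

theorem covariance_rotation [IsFiniteMeasure P] {U V : Ω → ℝ} (hU : MemLp U 2 P)
    (hV : MemLp V 2 P) (hUV : cov[U, V; P] = 0) (a b : ℝ) :
    cov[fun ω ↦ a * U ω - b * V ω, fun ω ↦ b * U ω + a * V ω; P] =
      a * b * (Var[U; P] - Var[V; P]) := by
  have hVU : cov[V, U; P] = 0 := covariance_comm U V ▸ hUV
  change cov[(fun ω ↦ a * U ω) - fun ω ↦ b * V ω, (fun ω ↦ b * U ω) + fun ω ↦ a * V ω; P] = _
  rw [covariance_sub_left (hU.const_mul a) (hV.const_mul b)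
      ((hU.const_mul b).add (hV.const_mul a)),
    covariance_add_right (hU.const_mul a) (hU.const_mul b) (hV.const_mul a),
    covariance_add_right (hV.const_mul b) (hU.const_mul b) (hV.const_mul a)]
  simp only [covariance_const_mul_left, covariance_const_mul_right, hUV, hVU,
    covariance_self hU.aemeasurable, covariance_self hV.aemeasurable]
  ring

theorem integral_sum_mul_softmax_rotation_nonneg [Fintype ι] [Nonempty ι] {X Y : ι → Ω → ℝ}
    (hX : HasGaussianLaw (fun ω i ↦ X i ω) P) (hY : HasGaussianLaw (fun ω i ↦ Y i ω) P)
    (hXY : IndepFun (fun ω i ↦ X i ω) (fun ω i ↦ Y i ω) P)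
    (hX0 : ∀ i, ∫ ω, X i ω ∂P = 0) (hY0 : ∀ i, ∫ ω, Y i ω ∂P = 0)
    (hvar : ∀ i j, Var[fun ω ↦ Y i ω - Y j ω; P] ≤ Var[fun ω ↦ X i ω - X j ω; P]) {a b : ℝ}
    (hab : 0 ≤ a * b) :
    0 ≤ ∫ ω, ∑ i, (a * X i ω - b * Y i ω) * softmax i (fun j ↦ b * X j ω + a * Y j ω) ∂P := by
  have := hX.isProbabilityMeasure
  refine integral_sum_mul_softmax_nonneg ?_ (fun i ↦ ?_) fun i j ↦ ?_
  · exact (hXY.hasGaussianLaw hX hY).map_fun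
      ((a • ContinuousLinearMap.fst ℝ (ι → ℝ) (ι → ℝ) -
          b • ContinuousLinearMap.snd ℝ (ι → ℝ) (ι → ℝ)).prod
        (b • ContinuousLinearMap.fst ℝ (ι → ℝ) (ι → ℝ) +
          a • ContinuousLinearMap.snd ℝ (ι → ℝ) (ι → ℝ)))
  · rw [integral_sub ((hX.eval i).integrable.const_mul _) ((hY.eval i).integrable.const_mul _),
      integral_const_mul, integral_const_mul, hX0, hY0, mul_zero, mul_zero, sub_zero]
  · have hU : MemLp (fun ω ↦ X i ω - X j ω) 2 P := (hX.eval i).memLp_two.sub (hX.eval j).memLp_two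
    have hV : MemLp (fun ω ↦ Y i ω - Y j ω) 2 P := (hY.eval i).memLp_two.sub (hY.eval j).memLp_two
    have hUV : IndepFun (fun ω ↦ X i ω - X j ω) (fun ω ↦ Y i ω - Y j ω) P :=
      hXY.comp (φ := fun x : ι → ℝ ↦ x i - x j) (ψ := fun y : ι → ℝ ↦ y i - y j)
        (by fun_prop) (by fun_prop)
    have hcov := mul_nonneg hab (sub_nonneg.2 (hvar i j))
    rw [← covariance_rotation hU hV (hUV.covariance_eq_zero hU hV)] at hcov
    exact hcov.trans_eq (by congr 1 <;> ext ω <;> ring)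

theorem integral_logSumExp_le_of_indepFun [Fintype ι] [Nonempty ι] {X Y : ι → Ω → ℝ}
    (hX : HasGaussianLaw (fun ω i ↦ X i ω) P) (hY : HasGaussianLaw (fun ω i ↦ Y i ω) P)
    (hXY : IndepFun (fun ω i ↦ X i ω) (fun ω i ↦ Y i ω) P)
    (hX0 : ∀ i, ∫ ω, X i ω ∂P = 0) (hY0 : ∀ i, ∫ ω, Y i ω ∂P = 0)
    (hvar : ∀ i j, Var[fun ω ↦ Y i ω - Y j ω; P] ≤ Var[fun ω ↦ X i ω - X j ω; P]) :
    ∫ ω, logSumExp (fun i ↦ Y i ω) ∂P ≤ ∫ ω, logSumExp (fun i ↦ X i ω) ∂P := by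
  have := hX.isProbabilityMeasure
  have hderiv := hasDerivAt_integral_logSumExp_rotation
    (fun i ↦ (hX.eval i).integrable) fun i ↦ (hY.eval i).integrable
  have hmono : MonotoneOn (fun θ ↦ ∫ ω, logSumExp (fun i ↦ sin θ * X i ω + cos θ * Y i ω) ∂P)
      (Icc 0 (π / 2)) := by
    refine monotoneOn_of_deriv_nonneg (convex_Icc _ _)
      (fun θ _ ↦ (hderiv θ).continuousAt.continuousWithinAt)
      (fun θ _ ↦ (hderiv θ).differentiableAt.differentiableWithinAt) fun θ hθ ↦ ?_
    rw [interior_Icc] at hθ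
    have hcos : 0 ≤ cos θ := cos_nonneg_of_mem_Icc ⟨by linarith [hθ.1, pi_pos], hθ.2.le⟩
    have hsin : 0 ≤ sin θ := sin_nonneg_of_nonneg_of_le_pi hθ.1.le (by linarith [hθ.2, pi_pos])
    rw [(hderiv θ).deriv]
    exact integral_sum_mul_softmax_rotation_nonneg hX hY hXY hX0 hY0 hvar (mul_nonneg hcos hsin)
  have hpi : 0 ≤ π / 2 := by positivity
  simpa using hmono (left_mem_Icc.2 hpi) (right_mem_Icc.2 hpi) hpi

theorem integrable_iSup [Finite ι] {X : ι → Ω → ℝ} (hX : ∀ i, Integrable (X i) P) :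
    Integrable (fun ω ↦ ⨆ i, X i ω) P := by
  have := Fintype.ofFinite ι
  cases isEmpty_or_nonempty ι
  · simp
  refine (integrable_finsetSum Finset.univ fun i _ ↦ (hX i).abs).mono'
    (AEMeasurable.iSup fun i ↦ (hX i).aemeasurable).aestronglyMeasurable (ae_of_all _ fun ω ↦ ?_)
  obtain ⟨i, hi⟩ := exists_eq_ciSup_of_finite (f := fun i ↦ X i ω)
  rw [← hi]
  exact Finset.single_le_sum (f := fun i ↦ |X i ω|) (fun _ _ ↦ abs_nonneg _) (Finset.mem_univ i)

theorem integral_iSup_le_add_log_card_div [Fintype ι] [Nonempty ι] {X Y : ι → Ω → ℝ}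
    (hX : HasGaussianLaw (fun ω i ↦ X i ω) P) (hY : HasGaussianLaw (fun ω i ↦ Y i ω) P)
    (hXY : IndepFun (fun ω i ↦ X i ω) (fun ω i ↦ Y i ω) P)
    (hX0 : ∀ i, ∫ ω, X i ω ∂P = 0) (hY0 : ∀ i, ∫ ω, Y i ω ∂P = 0)
    (hvar : ∀ i j, Var[fun ω ↦ Y i ω - Y j ω; P] ≤ Var[fun ω ↦ X i ω - X j ω; P])
    {β : ℝ} (hβ : 0 < β) :
    ∫ ω, ⨆ i, Y i ω ∂P ≤ ∫ ω, ⨆ i, X i ω ∂P + log (Fintype.card ι) / β := by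
  have := hX.isProbabilityMeasure
  have hXi (i : ι) : Integrable (X i) P := (hX.eval i).integrable
  have hYi (i : ι) : Integrable (Y i) P := (hY.eval i).integrable
  have hsup : Integrable (fun ω ↦ β * ⨆ i, X i ω) P := (integrable_iSup hXi).const_mul β
  have hscaled : ∫ ω, logSumExp (fun i ↦ β * Y i ω) ∂P ≤ ∫ ω, logSumExp (fun i ↦ β * X i ω) ∂P := by
    refine integral_logSumExp_le_of_indepFun (hX.fun_smul β) (hY.fun_smul β)
      (hXY.comp (φ := (β • ·)) (ψ := (β • ·)) (by fun_prop) (by fun_prop))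
      (fun i ↦ by rw [integral_const_mul, hX0, mul_zero])
      (fun i ↦ by rw [integral_const_mul, hY0, mul_zero]) fun i j ↦ ?_
    simp only [← mul_sub, variance_const_mul]
    exact mul_le_mul_of_nonneg_left (hvar i j) (sq_nonneg β)
  rw [← sub_le_iff_le_add', le_div_iff₀' hβ, mul_sub, sub_le_iff_le_add']
  calc β * ∫ ω, ⨆ i, Y i ω ∂P = ∫ ω, β * ⨆ i, Y i ω ∂P := (integral_const_mul _ _).symm
    _ ≤ ∫ ω, logSumExp (fun i ↦ β * Y i ω) ∂P := by
      refine integral_mono ((integrable_iSup hYi).const_mul β)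
        (integrable_logSumExp fun i ↦ (hYi i).const_mul β) fun ω ↦ ?_
      obtain ⟨i, hi⟩ := exists_eq_ciSup_of_finite (f := fun i ↦ Y i ω)
      exact hi ▸ le_logSumExp i fun i ↦ β * Y i ω
    _ ≤ ∫ ω, logSumExp (fun i ↦ β * X i ω) ∂P := hscaled
    _ ≤ ∫ ω, (β * (⨆ i, X i ω) + log (Fintype.card ι)) ∂P := by
      refine integral_mono (integrable_logSumExp fun i ↦ (hXi i).const_mul β)
        (hsup.add (integrable_const _)) fun ω ↦ logSumExp_le fun i ↦ ?_
      exact mul_le_mul_of_nonneg_left (le_ciSup (Finite.bddAbove_range fun i ↦ X i ω) i) hβ.le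
    _ = β * ∫ ω, ⨆ i, X i ω ∂P + log (Fintype.card ι) := by
      rw [integral_add hsup (integrable_const _), integral_const_mul]
      simp

theorem integral_iSup_le_of_indepFun [Finite ι] {X Y : ι → Ω → ℝ}
    (hX : HasGaussianLaw (fun ω i ↦ X i ω) P) (hY : HasGaussianLaw (fun ω i ↦ Y i ω) P)
    (hXY : IndepFun (fun ω i ↦ X i ω) (fun ω i ↦ Y i ω) P)
    (hX0 : ∀ i, ∫ ω, X i ω ∂P = 0) (hY0 : ∀ i, ∫ ω, Y i ω ∂P = 0)
    (hvar : ∀ i j, Var[fun ω ↦ Y i ω - Y j ω; P] ≤ Var[fun ω ↦ X i ω - X j ω; P]) :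
    ∫ ω, ⨆ i, Y i ω ∂P ≤ ∫ ω, ⨆ i, X i ω ∂P := by
  have := Fintype.ofFinite ι
  cases isEmpty_or_nonempty ι
  · simp
  have hlim : Tendsto (fun β ↦ ∫ ω, ⨆ i, X i ω ∂P + log (Fintype.card ι) / β) atTop
      (𝓝 (∫ ω, ⨆ i, X i ω ∂P + 0)) :=
    tendsto_const_nhds.add (tendsto_const_nhds.div_atTop tendsto_id)
  rw [add_zero] at hlim
  refine ge_of_tendsto hlim ?_
  filter_upwards [eventually_gt_atTop 0] with β hβ
  exact integral_iSup_le_add_log_card_div hX hY hXY hX0 hY0 hvar hβ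

variable {Ω' : Type*} [MeasurableSpace Ω'] {P' : Measure Ω'}

theorem hasGaussianLaw_comp_of_measurePreserving {E : Type*} [NormedAddCommGroup E]
    [NormedSpace ℝ E] [MeasurableSpace E] {X : Ω → E} {g : Ω' → Ω}
    (hX : HasGaussianLaw X P) (hg : MeasurePreserving g P' P) :
    HasGaussianLaw (fun ω ↦ X (g ω)) P' := by
  have := hX.isGaussian_map
  have hlaw : HasLaw X (P.map X) P := ⟨hX.aemeasurable, rfl⟩
  exact (hlaw.comp hg.hasLaw).hasGaussianLaw

theorem integral_iSup_le_of_variance_sub_le [Finite ι] {X : ι → Ω → ℝ} {Y : ι → Ω' → ℝ}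
    (hX : HasGaussianLaw (fun ω i ↦ X i ω) P) (hY : HasGaussianLaw (fun ω i ↦ Y i ω) P')
    (hX0 : ∀ i, ∫ ω, X i ω ∂P = 0) (hY0 : ∀ i, ∫ ω, Y i ω ∂P' = 0)
    (hvar : ∀ i j, Var[fun ω ↦ Y i ω - Y j ω; P'] ≤ Var[fun ω ↦ X i ω - X j ω; P]) :
    ∫ ω, ⨆ i, Y i ω ∂P' ≤ ∫ ω, ⨆ i, X i ω ∂P := by
  have := Fintype.ofFinite ι
  have := hX.isProbabilityMeasure
  have := hY.isProbabilityMeasure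
  have hXm (i : ι) : AEMeasurable (X i) P := (hX.eval i).aemeasurable
  have hYm (i : ι) : AEMeasurable (Y i) P' := (hY.eval i).aemeasurable
  have hprod : ∫ p, ⨆ i, Y i p.2 ∂P.prod P' ≤ ∫ p, ⨆ i, X i p.1 ∂P.prod P' := by
    refine integral_iSup_le_of_indepFun
      (hasGaussianLaw_comp_of_measurePreserving hX measurePreserving_fst)
      (hasGaussianLaw_comp_of_measurePreserving hY measurePreserving_snd)
      (indepFun_prod₀ hX.aemeasurable hY.aemeasurable)
      (fun i ↦ by simp [integral_fun_fst (X i), hX0])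
      (fun i ↦ by simp [integral_fun_snd (Y i), hY0]) fun i j ↦ ?_
    rw [measurePreserving_fst.variance_fun_comp (f := fun ω ↦ X i ω - X j ω)
        ((hXm i).sub (hXm j)),
      measurePreserving_snd.variance_fun_comp (f := fun ω ↦ Y i ω - Y j ω)
        ((hYm i).sub (hYm j))]
    exact hvar i j
  simpa [integral_fun_fst fun ω ↦ ⨆ i, X i ω, integral_fun_snd fun ω ↦ ⨆ i, Y i ω] using hprod

theorem integral_iSup_neg_le [Finite ι] {X : ι → Ω → ℝ}
    (hX : HasGaussianLaw (fun ω i ↦ X i ω) P) (hX0 : ∀ i, ∫ ω, X i ω ∂P = 0) :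
    ∫ ω, ⨆ i, -X i ω ∂P ≤ ∫ ω, ⨆ i, X i ω ∂P := by
  have := Fintype.ofFinite ι
  have hneg : HasGaussianLaw (fun ω i ↦ -X i ω) P :=
    hX.map_fun (-ContinuousLinearMap.id ℝ (ι → ℝ))
  refine integral_iSup_le_of_variance_sub_le hX hneg hX0
    (fun i ↦ by rw [integral_neg, hX0, neg_zero]) fun i j ↦ ?_
  rw [← variance_fun_neg]
  simp only [neg_sub_neg, neg_sub, le_refl]

end SudakovFernique

section StandardGaussian

theorem iSup_add_iSup_le_iSup_add {ι κ : Type*} [Finite ι] [Finite κ] [Nonempty ι] [Nonempty κ]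
    (x : ι → ℝ) (y : κ → ℝ) : (⨆ i, x i) + ⨆ j, y j ≤ ⨆ p : ι × κ, (x p.1 + y p.2) := by
  obtain ⟨i, hi⟩ := exists_eq_ciSup_of_finite (f := x)
  obtain ⟨j, hj⟩ := exists_eq_ciSup_of_finite (f := y)
  rw [← hi, ← hj]
  exact le_ciSup (Finite.bddAbove_range fun p : ι × κ ↦ x p.1 + y p.2) (i, j)

variable {Ω : Type*} [MeasurableSpace Ω] {P : Measure Ω} {ι κ : Type*} [Fintype ι] [Fintype κ]

/-- The law of a family of independent standard Gaussian variables, against which a general Gaussian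
family is compared. -/
def gaussianPi (ι : Type*) [Fintype ι] : Measure (ι → ℝ) := Measure.pi fun _ ↦ gaussianReal 0 1

/-- The expected maximum of a family of independent standard Gaussian variables; it is `0` for an
empty family. -/
def gaussianMax (ι : Type*) [Fintype ι] : ℝ := ∫ x, ⨆ i, x i ∂gaussianPi ι

instance : IsProbabilityMeasure (gaussianPi ι) := by
  unfold gaussianPi
  infer_instance

theorem map_eval_gaussianPi (i : ι) : (gaussianPi ι).map (fun x ↦ x i) = gaussianReal 0 1 :=
  (measurePreserving_eval (fun _ : ι ↦ gaussianReal 0 1) i).map_eq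

theorem iIndepFun_eval_gaussianPi : iIndepFun (fun i (x : ι → ℝ) ↦ x i) (gaussianPi ι) :=
  iIndepFun_pi (X := fun _ x ↦ x) fun _ ↦ aemeasurable_id

theorem hasGaussianLaw_gaussianPi : HasGaussianLaw (fun x : ι → ℝ ↦ x) (gaussianPi ι) := by
  refine iIndepFun_eval_gaussianPi.hasGaussianLaw fun i ↦ ⟨?_⟩
  rw [map_eval_gaussianPi]
  infer_instance

theorem memLp_two_eval_gaussianPi (i : ι) : MemLp (fun x : ι → ℝ ↦ x i) 2 (gaussianPi ι) :=
  (hasGaussianLaw_gaussianPi.eval i).memLp_two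

theorem integral_eval_gaussianPi (i : ι) : ∫ x : ι → ℝ, x i ∂gaussianPi ι = 0 := by
  have := integral_map (μ := gaussianPi ι) (φ := fun x ↦ x i) (f := fun x : ℝ ↦ x)
    (measurable_pi_apply i).aemeasurable (by fun_prop)
  rw [← this, map_eval_gaussianPi, integral_id_gaussianReal]

theorem variance_eval_gaussianPi (i : ι) : Var[fun x : ι → ℝ ↦ x i; gaussianPi ι] = 1 := by
  rw [← variance_id_map (measurable_pi_apply i).aemeasurable, map_eval_gaussianPi,
    variance_id_gaussianReal, NNReal.coe_one]

theorem variance_eval_sub_eval_gaussianPi {i j : ι} (hij : i ≠ j) :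
    Var[fun x : ι → ℝ ↦ x i - x j; gaussianPi ι] = 2 := by
  rw [variance_fun_sub (memLp_two_eval_gaussianPi i) (memLp_two_eval_gaussianPi j),
    variance_eval_gaussianPi, variance_eval_gaussianPi,
    (iIndepFun_eval_gaussianPi.indepFun hij).covariance_eq_zero (memLp_two_eval_gaussianPi i)
      (memLp_two_eval_gaussianPi j)]
  norm_num

theorem variance_mul_eval_sub_mul_eval_gaussianPi {i j : ι} (hij : i ≠ j) (a : ℝ) :
    Var[fun x : ι → ℝ ↦ a * x i - a * x j; gaussianPi ι] = 2 * a ^ 2 := by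
  simp only [← mul_sub, variance_const_mul, variance_eval_sub_eval_gaussianPi hij, mul_comm]

theorem variance_sub_self (X : Ω → ℝ) : Var[fun ω ↦ X ω - X ω; P] = 0 := by
  simp only [sub_self]
  exact variance_zero P

theorem variance_mul_eval_sub_mul_eval_gaussianPi_le (i j : ι) (a : ℝ) :
    Var[fun x : ι → ℝ ↦ a * x i - a * x j; gaussianPi ι] ≤ 2 * a ^ 2 := by
  rcases eq_or_ne i j with rfl | hij
  · rw [variance_sub_self]
    positivity
  · exact (variance_mul_eval_sub_mul_eval_gaussianPi hij a).le

theorem hasGaussianLaw_mul_gaussianPi (a : ℝ) :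
    HasGaussianLaw (fun (x : ι → ℝ) i ↦ a * x i) (gaussianPi ι) :=
  hasGaussianLaw_gaussianPi.fun_smul a

theorem integral_mul_eval_gaussianPi (a : ℝ) (i : ι) :
    ∫ x : ι → ℝ, a * x i ∂gaussianPi ι = 0 := by
  rw [integral_const_mul, integral_eval_gaussianPi, mul_zero]

theorem integral_iSup_mul_gaussianPi {a : ℝ} (ha : 0 ≤ a) :
    ∫ x : ι → ℝ, ⨆ i, a * x i ∂gaussianPi ι = a * gaussianMax ι := by
  rw [gaussianMax, ← integral_const_mul]
  simp_rw [Real.mul_iSup_of_nonneg ha]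

theorem mul_gaussianMax_le_integral_iSup {X : ι → Ω → ℝ}
    (hX : HasGaussianLaw (fun ω i ↦ X i ω) P) (hX0 : ∀ i, ∫ ω, X i ω ∂P = 0) {a : ℝ} (ha : 0 ≤ a)
    (hvar : ∀ i j, i ≠ j → 2 * a ^ 2 ≤ Var[fun ω ↦ X i ω - X j ω; P]) :
    a * gaussianMax ι ≤ ∫ ω, ⨆ i, X i ω ∂P := by
  rw [← integral_iSup_mul_gaussianPi ha]
  refine integral_iSup_le_of_variance_sub_le hX (hasGaussianLaw_mul_gaussianPi a) hX0
    (integral_mul_eval_gaussianPi a) fun i j ↦ ?_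
  rcases eq_or_ne i j with rfl | hij
  · rw [variance_sub_self, variance_sub_self]
  · exact (variance_mul_eval_sub_mul_eval_gaussianPi hij a).trans_le (hvar i j hij)

theorem integral_iSup_le_mul_gaussianMax {X : ι → Ω → ℝ}
    (hX : HasGaussianLaw (fun ω i ↦ X i ω) P) (hX0 : ∀ i, ∫ ω, X i ω ∂P = 0) {a : ℝ} (ha : 0 ≤ a)
    (hvar : ∀ i j, Var[fun ω ↦ X i ω - X j ω; P] ≤ 2 * a ^ 2) :
    ∫ ω, ⨆ i, X i ω ∂P ≤ a * gaussianMax ι := by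
  rw [← integral_iSup_mul_gaussianPi ha]
  refine integral_iSup_le_of_variance_sub_le (hasGaussianLaw_mul_gaussianPi a) hX
    (integral_mul_eval_gaussianPi a) hX0 fun i j ↦ ?_
  rcases eq_or_ne i j with rfl | hij
  · rw [variance_sub_self, variance_sub_self]
  · exact (hvar i j).trans_eq (variance_mul_eval_sub_mul_eval_gaussianPi hij a).symm

theorem gaussianMax_mono [Nonempty κ] (e : κ ↪ ι) : gaussianMax κ ≤ gaussianMax ι := by
  have he : HasGaussianLaw (fun (x : ι → ℝ) k ↦ x (e k)) (gaussianPi ι) :=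
    (hasGaussianLaw_gaussianPi (ι := ι)).map_fun
      (ContinuousLinearMap.pi fun k ↦ ContinuousLinearMap.proj (R := ℝ) (e k))
  calc gaussianMax κ ≤ ∫ x : ι → ℝ, ⨆ k, x (e k) ∂gaussianPi ι := by
        simpa using mul_gaussianMax_le_integral_iSup he (fun k ↦ integral_eval_gaussianPi (e k))
          zero_le_one fun k l hkl ↦ by
            rw [variance_eval_sub_eval_gaussianPi (e.injective.ne hkl), one_pow, mul_one]
    _ ≤ gaussianMax ι :=
        integral_mono (integrable_iSup fun k ↦ (he.eval k).integrable)
          (integrable_iSup fun i ↦ (hasGaussianLaw_gaussianPi.eval i).integrable) fun x ↦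
          ciSup_le fun k ↦ le_ciSup (Finite.bddAbove_range x) (e k)

theorem gaussianMax_nonneg : 0 ≤ gaussianMax ι := by
  cases isEmpty_or_nonempty ι
  · simp [gaussianMax]
  have hint (i : ι) := (hasGaussianLaw_gaussianPi.eval i).integrable
  obtain ⟨i⟩ := ‹Nonempty ι›
  rw [← integral_eval_gaussianPi i]
  exact integral_mono (hint i) (integrable_iSup hint) fun x ↦ le_ciSup (Finite.bddAbove_range x) i

theorem integral_iSup_add_integral_iSup_le [Nonempty ι] [Nonempty κ] {X : ι → Ω → ℝ}
    {Y : κ → Ω → ℝ} (hX : HasGaussianLaw (fun ω i ↦ X i ω) P)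
    (hY : HasGaussianLaw (fun ω j ↦ Y j ω) P)
    (hXY : IndepFun (fun ω i ↦ X i ω) (fun ω j ↦ Y j ω) P)
    (hX0 : ∀ i, ∫ ω, X i ω ∂P = 0) (hY0 : ∀ j, ∫ ω, Y j ω ∂P = 0) {a b : ℝ}
    (hXvar : ∀ i i', Var[fun ω ↦ X i ω - X i' ω; P] ≤ 2 * a ^ 2)
    (hYvar : ∀ j j', Var[fun ω ↦ Y j ω - Y j' ω; P] ≤ 2 * b ^ 2) :
    ∫ ω, ⨆ i, X i ω ∂P + ∫ ω, ⨆ j, Y j ω ∂P ≤ √(a ^ 2 + b ^ 2) * gaussianMax (ι × κ) := by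
  have := hX.isProbabilityMeasure
  have hXi (i : ι) : Integrable (X i) P := (hX.eval i).integrable
  have hYj (j : κ) : Integrable (Y j) P := (hY.eval j).integrable
  have hsum : HasGaussianLaw (fun ω (p : ι × κ) ↦ X p.1 ω + Y p.2 ω) P :=
    (hXY.hasGaussianLaw hX hY).map_fun (ContinuousLinearMap.pi fun p : ι × κ ↦
      (ContinuousLinearMap.proj (R := ℝ) (φ := fun _ : ι ↦ ℝ) p.1).coprod
        (ContinuousLinearMap.proj (R := ℝ) (φ := fun _ : κ ↦ ℝ) p.2))
  have hvar (p q : ι × κ) :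
      Var[fun ω ↦ X p.1 ω + Y p.2 ω - (X q.1 ω + Y q.2 ω); P] ≤ 2 * √(a ^ 2 + b ^ 2) ^ 2 := by
    have hindep : IndepFun (fun ω ↦ X p.1 ω - X q.1 ω) (fun ω ↦ Y p.2 ω - Y q.2 ω) P :=
      hXY.comp (φ := fun x : ι → ℝ ↦ x p.1 - x q.1) (ψ := fun y : κ → ℝ ↦ y p.2 - y q.2)
        (by fun_prop) (by fun_prop)
    simp only [add_sub_add_comm]
    rw [hindep.variance_fun_add (X := fun ω ↦ X p.1 ω - X q.1 ω) (Y := fun ω ↦ Y p.2 ω - Y q.2 ω)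
      ((hX.eval _).memLp_two.sub (hX.eval _).memLp_two)
      ((hY.eval _).memLp_two.sub (hY.eval _).memLp_two), sq_sqrt (by positivity)]
    linarith [hXvar p.1 q.1, hYvar p.2 q.2]
  calc ∫ ω, ⨆ i, X i ω ∂P + ∫ ω, ⨆ j, Y j ω ∂P
      = ∫ ω, ((⨆ i, X i ω) + ⨆ j, Y j ω) ∂P :=
        (integral_add (integrable_iSup hXi) (integrable_iSup hYj)).symm
    _ ≤ ∫ ω, ⨆ p : ι × κ, (X p.1 ω + Y p.2 ω) ∂P :=
        integral_mono ((integrable_iSup hXi).add (integrable_iSup hYj))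
          (integrable_iSup fun p ↦ (hXi p.1).add (hYj p.2)) fun ω ↦
          iSup_add_iSup_le_iSup_add (fun i ↦ X i ω) fun j ↦ Y j ω
    _ ≤ √(a ^ 2 + b ^ 2) * gaussianMax (ι × κ) :=
        integral_iSup_le_mul_gaussianMax hsum
          (fun p ↦ by rw [integral_add (hXi _) (hYj _), hX0, hY0, add_zero]) (sqrt_nonneg _) hvar

theorem mul_gaussianMax_add_mul_gaussianMax_le [Nonempty ι] [Nonempty κ] {a b : ℝ} (ha : 0 ≤ a)
    (hb : 0 ≤ b) :
    a * gaussianMax ι + b * gaussianMax κ ≤ √(a ^ 2 + b ^ 2) * gaussianMax (ι × κ) := by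
  have hX := hasGaussianLaw_mul_gaussianPi (ι := ι) a
  have hY := hasGaussianLaw_mul_gaussianPi (ι := κ) b
  have hXm := fun i ↦ (hX.eval i).aemeasurable
  have hYm := fun j ↦ (hY.eval j).aemeasurable
  have := integral_iSup_add_integral_iSup_le (P := (gaussianPi ι).prod (gaussianPi κ))
    (X := fun i p ↦ a * p.1 i) (Y := fun j p ↦ b * p.2 j) (a := a) (b := b)
    (hasGaussianLaw_comp_of_measurePreserving hX measurePreserving_fst)
    (hasGaussianLaw_comp_of_measurePreserving hY measurePreserving_snd)
    (indepFun_prod₀ hX.aemeasurable hY.aemeasurable)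
    (fun i ↦ by simp [integral_fun_fst fun x : ι → ℝ ↦ a * x i, integral_mul_eval_gaussianPi])
    (fun i ↦ by simp [integral_fun_snd fun x : κ → ℝ ↦ b * x i, integral_mul_eval_gaussianPi])
    (fun i j ↦ by
      rw [measurePreserving_fst.variance_fun_comp (f := fun x : ι → ℝ ↦ a * x i - a * x j)
        ((hXm i).sub (hXm j))]
      exact variance_mul_eval_sub_mul_eval_gaussianPi_le i j a)
    fun i j ↦ by
      rw [measurePreserving_snd.variance_fun_comp (f := fun x : κ → ℝ ↦ b * x i - b * x j)
        ((hYm i).sub (hYm j))]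
      exact variance_mul_eval_sub_mul_eval_gaussianPi_le i j b
  simpa [integral_fun_fst fun x : ι → ℝ ↦ ⨆ i, a * x i,
    integral_fun_snd fun x : κ → ℝ ↦ ⨆ j, b * x j, integral_iSup_mul_gaussianPi ha,
    integral_iSup_mul_gaussianPi hb] using this

theorem gaussianMax_sq_add_gaussianMax_sq_le [Nonempty ι] [Nonempty κ] :
    gaussianMax ι ^ 2 + gaussianMax κ ^ 2 ≤ gaussianMax (ι × κ) ^ 2 := by
  set r := √(gaussianMax ι ^ 2 + gaussianMax κ ^ 2)
  have hr : r ^ 2 = gaussianMax ι ^ 2 + gaussianMax κ ^ 2 := sq_sqrt (by positivity)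
  have hι : 0 ≤ gaussianMax ι := gaussianMax_nonneg
  have hκ : 0 ≤ gaussianMax κ := gaussianMax_nonneg
  have hle : gaussianMax ι * gaussianMax ι + gaussianMax κ * gaussianMax κ ≤
      r * gaussianMax (ι × κ) := mul_gaussianMax_add_mul_gaussianMax_le hι hκ
  linarith [two_mul_le_add_sq r (gaussianMax (ι × κ))]

end StandardGaussian

section PairwiseDifferences

variable {ι : Type*} [Fintype ι]

theorem convexOn_sum_abs_sub :
    ConvexOn ℝ univ (fun x : ι → ℝ ↦ ∑ i, ∑ j, |x i - x j|) := by
  refine ⟨convex_univ, fun x _ y _ a b ha hb _ ↦ ?_⟩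
  simp only [smul_eq_mul, Finset.mul_sum, ← Finset.sum_add_distrib, Pi.add_apply, Pi.smul_apply]
  gcongr with i _ j _
  calc |a * x i + b * y i - (a * x j + b * y j)| = |a * (x i - x j) + b * (y i - y j)| := by ring_nf
    _ ≤ a * |x i - x j| + b * |y i - y j| := by
      grw [abs_add_le, abs_mul, abs_mul, abs_of_nonneg ha, abs_of_nonneg hb]

theorem sum_abs_sub_le_of_eq_or_eq {x : ι → ℝ} {a b : ℝ} (hab : a ≤ b)
    (hx : ∀ i, x i = a ∨ x i = b) :
    ∑ i, ∑ j, |x i - x j| ≤ (Fintype.card ι ^ 2 / 2 : ℕ) * (b - a) := by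
  classical
  let N := Fintype.card ι
  let K := (Finset.univ.filter fun i ↦ x i = b).card
  let u (i : ι) : ℝ := if x i = b then 1 else 0
  have hu : ∑ i, u i = K := by simp [u, K]
  have hu01 (i : ι) : u i = 0 ∨ u i = 1 := (ite_eq_or_eq _ _ _).symm
  have hxu (i : ι) : x i = a + u i * (b - a) := by grind
  have habs (i j : ι) : |x i - x j| = (u i + u j - 2 * (u i * u j)) * (b - a) := by
    rw [hxu, hxu, add_sub_add_left_eq_sub, ← sub_mul, abs_mul, abs_of_nonneg (sub_nonneg.2 hab)]
    congr 1
    rcases hu01 i with hi | hi <;> rcases hu01 j with hj | hj <;> norm_num [hi, hj]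
  have hKN : K ≤ N := Finset.card_le_univ _
  have hcard : 2 * (K * (N - K)) ≤ N ^ 2 / 2 := by
    obtain ⟨L, hL⟩ := Nat.exists_eq_add_of_le hKN
    rw [Nat.le_div_iff_mul_le two_pos, hL, Nat.add_sub_cancel_left]
    nlinarith [two_mul_le_add_sq K L]
  calc ∑ i, ∑ j, |x i - x j| = (2 * (K * (N - K)) : ℕ) * (b - a) := by
        simp only [habs, ← Finset.sum_mul, Finset.sum_sub_distrib, Finset.sum_add_distrib,
          ← Finset.mul_sum, hu, Finset.sum_const, Finset.card_univ, nsmul_eq_mul]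
        push_cast [Nat.cast_sub hKN]
        ring
    _ ≤ (N ^ 2 / 2 : ℕ) * (b - a) :=
        mul_le_mul_of_nonneg_right (by exact_mod_cast hcard) (sub_nonneg.2 hab)

theorem sum_abs_sub_le {x : ι → ℝ} {a b : ℝ} (hx : ∀ i, x i ∈ Icc a b) :
    ∑ i, ∑ j, |x i - x j| ≤ (Fintype.card ι ^ 2 / 2 : ℕ) * (b - a) := by
  cases isEmpty_or_nonempty ι
  · simp
  have hab : a ≤ b := (hx (Classical.arbitrary ι)).1.trans (hx _).2
  have hmem : x ∈ convexHull ℝ (univ.pi fun _ : ι ↦ ({a, b} : Set ℝ)) := by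
    rw [convexHull_pi]
    intro i _
    rw [convexHull_pair, segment_eq_Icc hab]
    exact hx i
  obtain ⟨y, hy, hxy⟩ := convexOn_sum_abs_sub.exists_ge_of_mem_convexHull (subset_univ _) hmem
  exact hxy.trans (sum_abs_sub_le_of_eq_or_eq hab fun i ↦ hy i trivial)

theorem integral_abs_gaussianReal_zero (v : NNReal) :
    ∫ x, |x| ∂gaussianReal 0 v = √(2 * v / π) := by
  rcases eq_or_ne v 0 with rfl | hv
  · simp
  have hv0 : (0 : ℝ) < v := by positivity
  let f : ℝ → ℝ := fun y ↦
    (√(2 * π * v))⁻¹ * (y ^ (1 : ℝ) * rexp (-(2 * v : ℝ)⁻¹ * y ^ (2 : ℝ)))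
  have hpdf (x : ℝ) : gaussianPDFReal 0 v x • |x| = f |x| := by
    simp only [gaussianPDFReal, f, smul_eq_mul, rpow_one, rpow_ofNat, sq_abs]
    ring_nf
  rw [integral_gaussianReal_eq_integral_smul hv, integral_congr_ae (ae_of_all _ hpdf),
    integral_comp_abs (f := f), integral_const_mul,
    integral_rpow_mul_exp_neg_mul_rpow zero_lt_two (by norm_num) (by positivity),
    one_add_one_eq_two, neg_div, div_self two_ne_zero, rpow_neg_one, inv_inv, Gamma_one,
    sqrt_mul' _ hv0.le, sqrt_mul' _ pi_pos.le, sqrt_div' _ pi_pos.le, sqrt_mul' _ hv0.le]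
  field_simp
  rw [sq_sqrt zero_le_two, sq_sqrt hv0.le, mul_comm]

theorem integral_abs_of_hasGaussianLaw {Ω : Type*} [MeasurableSpace Ω] {P : Measure Ω} {W : Ω → ℝ}
    (hW : HasGaussianLaw W P) (hW0 : ∫ ω, W ω ∂P = 0) :
    ∫ ω, |W ω| ∂P = √(2 * Var[W; P] / π) := by
  rw [← integral_map (f := fun x : ℝ ↦ |x|) hW.aemeasurable (by fun_prop), hW.map_eq_gaussianReal,
    hW0, integral_abs_gaussianReal_zero, coe_toNNReal _ (variance_nonneg _ _)]

theorem hasGaussianLaw_eval_sub_eval_gaussianPi (i j : ι) :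
    HasGaussianLaw (fun x : ι → ℝ ↦ x i - x j) (gaussianPi ι) :=
  (hasGaussianLaw_gaussianPi (ι := ι)).map_fun
    (ContinuousLinearMap.proj (R := ℝ) (φ := fun _ : ι ↦ ℝ) i - ContinuousLinearMap.proj j)

theorem integral_abs_eval_sub_eval_gaussianPi {i j : ι} (hij : i ≠ j) :
    ∫ x : ι → ℝ, |x i - x j| ∂gaussianPi ι = 2 / √π := by
  have hint (i : ι) := (hasGaussianLaw_gaussianPi.eval i).integrable
  rw [integral_abs_of_hasGaussianLaw (hasGaussianLaw_eval_sub_eval_gaussianPi i j)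
      (by rw [integral_sub (hint i) (hint j), integral_eval_gaussianPi, integral_eval_gaussianPi,
        sub_zero]),
    variance_eval_sub_eval_gaussianPi hij, sqrt_div (by norm_num), ← sq, sqrt_sq zero_le_two]

theorem integral_sum_abs_sub_gaussianPi :
    ∫ x : ι → ℝ, ∑ i, ∑ j, |x i - x j| ∂gaussianPi ι =
      Fintype.card ι * (Fintype.card ι - 1) * (2 / √π) := by
  classical
  have hint (i j : ι) := (hasGaussianLaw_eval_sub_eval_gaussianPi i j).integrable.abs
  have habs (i j : ι) :
      ∫ x : ι → ℝ, |x i - x j| ∂gaussianPi ι = (1 - if i = j then 1 else 0) * (2 / √π) := by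
    rcases eq_or_ne i j with rfl | hij
    · simp
    · simp [hij, integral_abs_eval_sub_eval_gaussianPi]
  rw [integral_finsetSum _ fun i _ ↦ integrable_finsetSum _ fun j _ ↦ hint i j]
  simp only [integral_finsetSum _ fun j _ ↦ hint _ j, habs, ← Finset.sum_mul,
    Finset.sum_sub_distrib, Finset.sum_ite_eq, Finset.mem_univ, if_true, Finset.sum_const,
    Finset.card_univ, nsmul_eq_mul]
  ring

theorem card_mul_card_sub_one_div_sqrt_pi_le :
    Fintype.card ι * (Fintype.card ι - 1) / √π ≤
      (Fintype.card ι ^ 2 / 2 : ℕ) * gaussianMax ι := by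
  have hX := hasGaussianLaw_gaussianPi (ι := ι)
  have hmax := integrable_iSup fun i ↦ (hX.eval i).integrable
  have hmin := integrable_iSup fun i ↦ (hX.eval i).integrable.fun_neg
  have hneg := integral_iSup_neg_le (X := fun i (x : ι → ℝ) ↦ x i) hX integral_eval_gaussianPi
  have hsum := calc Fintype.card ι * (Fintype.card ι - 1) * (2 / √π)
      = ∫ x : ι → ℝ, ∑ i, ∑ j, |x i - x j| ∂gaussianPi ι := integral_sum_abs_sub_gaussianPi.symm
    _ ≤ ∫ x : ι → ℝ, (Fintype.card ι ^ 2 / 2 : ℕ) * ((⨆ i, x i) + ⨆ i, -x i) ∂gaussianPi ι := by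
        refine integral_mono (integrable_finsetSum _ fun i _ ↦ integrable_finsetSum _ fun j _ ↦
          (hasGaussianLaw_eval_sub_eval_gaussianPi i j).integrable.abs)
          ((hmax.add hmin).const_mul _) fun x ↦ ?_
        have hx (i : ι) : x i ∈ Icc (-⨆ i, -x i) (⨆ i, x i) :=
          ⟨neg_le.1 (le_ciSup (Finite.bddAbove_range fun i ↦ -x i) i),
            le_ciSup (Finite.bddAbove_range x) i⟩
        simpa using sum_abs_sub_le hx
    _ = (Fintype.card ι ^ 2 / 2 : ℕ) * (gaussianMax ι + ∫ x : ι → ℝ, ⨆ i, -x i ∂gaussianPi ι) := by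
        rw [integral_const_mul, integral_add hmax hmin, gaussianMax]
    _ ≤ (Fintype.card ι ^ 2 / 2 : ℕ) * (gaussianMax ι + gaussianMax ι) := by
        gcongr
        exact hneg
  linear_combination hsum / 2

end PairwiseDifferences

section LogarithmicBound

variable {ι κ : Type*} [Fintype ι] [Fintype κ]

theorem gaussianMax_le_of_card_le [Nonempty κ] (h : Fintype.card κ ≤ Fintype.card ι) :
    gaussianMax κ ≤ gaussianMax ι :=
  gaussianMax_mono (Function.Embedding.nonempty_of_card_le h).some

theorem sq_card_ratio_le_pi_mul_gaussianMax_sq :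
    (Fintype.card ι * (Fintype.card ι - 1) / (Fintype.card ι ^ 2 / 2 : ℕ) : ℝ) ^ 2 ≤
      π * gaussianMax ι ^ 2 := by
  have hG : 0 ≤ gaussianMax ι := gaussianMax_nonneg
  have hnum : 0 ≤ (Fintype.card ι * (Fintype.card ι - 1) : ℝ) := by
    rcases (Fintype.card ι).eq_zero_or_pos with h0 | hpos
    · simp [h0]
    · exact mul_nonneg (by positivity) (sub_nonneg.2 (by exact_mod_cast hpos))
  have h := card_mul_card_sub_one_div_sqrt_pi_le (ι := ι)
  rw [div_le_iff₀ (by positivity)] at h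
  have hle : (Fintype.card ι * (Fintype.card ι - 1) / (Fintype.card ι ^ 2 / 2 : ℕ) : ℝ) ≤
      √π * gaussianMax ι :=
    div_le_of_le_mul₀ (by positivity) (by positivity) (by linarith)
  calc _ ≤ (√π * gaussianMax ι) ^ 2 := pow_le_pow_left₀ (by positivity) hle 2
    _ = π * gaussianMax ι ^ 2 := by rw [mul_pow, sq_sqrt pi_pos.le]

theorem pi_mul_gaussianMax_fin_sq_add_le {M N K : ℕ} [NeZero M] [NeZero N] (h : M * N ≤ K) :
    π * gaussianMax (Fin M) ^ 2 + π * gaussianMax (Fin N) ^ 2 ≤ π * gaussianMax (Fin K) ^ 2 := by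
  rw [← mul_add]
  gcongr
  calc gaussianMax (Fin M) ^ 2 + gaussianMax (Fin N) ^ 2 ≤ gaussianMax (Fin M × Fin N) ^ 2 :=
        gaussianMax_sq_add_gaussianMax_sq_le
    _ ≤ gaussianMax (Fin K) ^ 2 :=
        pow_le_pow_left₀ gaussianMax_nonneg (gaussianMax_le_of_card_le (by simpa using h)) 2

theorem one_le_pi_mul_gaussianMax_fin_two_sq : 1 ≤ π * gaussianMax (Fin 2) ^ 2 := by
  convert sq_card_ratio_le_pi_mul_gaussianMax_sq (ι := Fin 2)
  norm_num

theorem nine_fourths_le_pi_mul_gaussianMax_fin_three_sq :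
    9 / 4 ≤ π * gaussianMax (Fin 3) ^ 2 := by
  convert sq_card_ratio_le_pi_mul_gaussianMax_sq (ι := Fin 3)
  norm_num

theorem twentyfive_ninths_le_pi_mul_gaussianMax_fin_five_sq :
    25 / 9 ≤ π * gaussianMax (Fin 5) ^ 2 := by
  convert sq_card_ratio_le_pi_mul_gaussianMax_sq (ι := Fin 5)
  norm_num

theorem logb_two_natCast_le {N p q : ℕ} (hN : 0 < N) (hq : 0 < q) (h : N ^ q ≤ 2 ^ p) :
    logb 2 N ≤ p / q := by
  have hlog : logb 2 ((N : ℝ) ^ q) ≤ logb 2 (2 ^ p) :=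
    logb_le_logb_of_le one_lt_two (by positivity) (by exact_mod_cast h)
  rw [logb_pow, logb_pow, logb_self_eq_one one_lt_two, mul_one] at hlog
  rwa [le_div_iff₀' (by positivity)]

-- Bounding `logb 2 (N + 1)` rather than `logb 2 N` lets the induction halve `N` with rounding:
-- `N + 1 ≤ 2 * (N / 2 + 1)`.
theorem logb_two_add_one_le_pi_mul_gaussianMax_fin_sq {N : ℕ} (hN : 5 ≤ N) :
    logb 2 (N + 1 : ℕ) ≤ π * gaussianMax (Fin N) ^ 2 := by
  induction N using Nat.strong_induction_on with
  | _ N ih =>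
  have hlog {M p q : ℕ} (hMN : N ≤ M) (hq : 0 < q) (h : (M + 1) ^ q ≤ 2 ^ p) :
      logb 2 (N + 1 : ℕ) ≤ p / q :=
    logb_two_natCast_le N.succ_pos hq ((Nat.pow_le_pow_left (Nat.succ_le_succ hMN) q).trans h)
  have htwo := one_le_pi_mul_gaussianMax_fin_two_sq
  have hthree := nine_fourths_le_pi_mul_gaussianMax_fin_three_sq
  rcases hN.eq_or_lt with rfl | h5
  · have hlog6 : logb 2 (5 + 1 : ℕ) ≤ 25 / 9 := by
      exact_mod_cast hlog (p := 25) (q := 9) le_rfl (by norm_num) (by norm_num)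
    exact hlog6.trans twentyfive_ninths_le_pi_mul_gaussianMax_fin_five_sq
  rcases le_or_gt N 8 with h8 | h8
  · have hlog9 : logb 2 (N + 1 : ℕ) ≤ 13 / 4 := by
      exact_mod_cast hlog (p := 13) (q := 4) h8 (by norm_num) (by norm_num)
    linarith [pi_mul_gaussianMax_fin_sq_add_le (M := 2) (N := 3) (K := N) h5]
  rcases le_or_gt N 9 with h9 | h10
  · have hlog10 : logb 2 (N + 1 : ℕ) ≤ 9 / 2 := by
      exact_mod_cast hlog (p := 9) (q := 2) h9 (by norm_num) (by norm_num)
    linarith [pi_mul_gaussianMax_fin_sq_add_le (M := 3) (N := 3) (K := N) h8]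
  have : NeZero (N / 2) := ⟨by lia⟩
  calc logb 2 (N + 1 : ℕ) ≤ logb 2 (2 * (N / 2 + 1 : ℕ)) :=
        logb_le_logb_of_le one_lt_two (by positivity) (by exact_mod_cast (by lia))
    _ = 1 + logb 2 (N / 2 + 1 : ℕ) := by
        rw [logb_mul two_ne_zero (by positivity), logb_self_eq_one one_lt_two]
    _ ≤ π * gaussianMax (Fin 2) ^ 2 + π * gaussianMax (Fin (N / 2)) ^ 2 :=
        add_le_add htwo (ih _ (by lia) (by lia))
    _ ≤ π * gaussianMax (Fin N) ^ 2 := pi_mul_gaussianMax_fin_sq_add_le (Nat.mul_div_le N 2)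

theorem logb_two_card_le_pi_mul_gaussianMax_sq [Nonempty ι] :
    logb 2 (Fintype.card ι) ≤ π * gaussianMax ι ^ 2 := by
  set N := Fintype.card ι
  have hN0 : 0 < N := Fintype.card_pos
  have hmono {M : ℕ} [NeZero M] (hM : M ≤ N) :
      π * gaussianMax (Fin M) ^ 2 ≤ π * gaussianMax ι ^ 2 :=
    mul_le_mul_of_nonneg_left (pow_le_pow_left₀ gaussianMax_nonneg
      (gaussianMax_le_of_card_le (by simpa using hM)) 2) pi_pos.le
  have hlog {p : ℕ} (h : N ≤ 2 ^ p) : logb 2 N ≤ p := by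
    simpa using logb_two_natCast_le (p := p) hN0 one_pos (by simpa using h)
  rcases le_or_gt N 1 with h1 | h2
  · have hlog1 : logb 2 N ≤ 0 := by exact_mod_cast hlog (p := 0) h1
    exact hlog1.trans (by positivity)
  rcases le_or_gt N 2 with h2' | h3
  · have hlog2 : logb 2 N ≤ 1 := by exact_mod_cast hlog (p := 1) h2'
    exact (hlog2.trans one_le_pi_mul_gaussianMax_fin_two_sq).trans (hmono h2)
  rcases le_or_gt N 4 with h4 | h5
  · have hlog4 : logb 2 N ≤ 2 := by exact_mod_cast hlog (p := 2) h4
    linarith [nine_fourths_le_pi_mul_gaussianMax_fin_three_sq, hmono h3]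
  · have : NeZero N := ⟨by lia⟩
    calc logb 2 N ≤ logb 2 (N + 1 : ℕ) :=
          logb_le_logb_of_le one_lt_two (by positivity) (by exact_mod_cast N.le_succ)
      _ ≤ π * gaussianMax (Fin N) ^ 2 := logb_two_add_one_le_pi_mul_gaussianMax_fin_sq h5
      _ ≤ π * gaussianMax ι ^ 2 := hmono le_rfl

end LogarithmicBound

theorem mul_sqrt_logb_card_le_integral_iSup {Ω ι : Type*} [MeasurableSpace Ω] {P : Measure Ω}
    [Fintype ι] [Nonempty ι] {X : ι → Ω → ℝ} (hX : HasGaussianLaw (fun ω i ↦ X i ω) P)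
    (hX0 : ∀ i, ∫ ω, X i ω ∂P = 0) {δ : ℝ} (hδ : 0 ≤ δ)
    (hvar : ∀ i j, i ≠ j → δ ^ 2 ≤ Var[fun ω ↦ X i ω - X j ω; P]) :
    δ * √(logb 2 (Fintype.card ι) / (2 * π)) ≤ ∫ ω, ⨆ i, X i ω ∂P := by
  have hlog : √(logb 2 (Fintype.card ι) / π) ≤ gaussianMax ι := by
    rw [sqrt_le_left gaussianMax_nonneg, div_le_iff₀' pi_pos]
    exact logb_two_card_le_pi_mul_gaussianMax_sq
  calc δ * √(logb 2 (Fintype.card ι) / (2 * π))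
      = δ / √2 * √(logb 2 (Fintype.card ι) / π) := by
        rw [mul_comm 2 π, ← div_div, sqrt_div' _ zero_le_two]
        ring
    _ ≤ δ / √2 * gaussianMax ι := by gcongr
    _ ≤ ∫ ω, ⨆ i, X i ω ∂P := by
        refine mul_gaussianMax_le_integral_iSup hX hX0 (by positivity) fun i j hij ↦ ?_
        rw [div_pow, sq_sqrt zero_le_two, mul_div_cancel₀ _ two_ne_zero]
        exact hvar i j hij

section GaussianProcess

variable {Ω : Type} [MeasurableSpace Ω] {μ : Measure Ω} {X : ℝ → Ω → ℝ} {S : Set ℝ} {k : ℕ}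
  {ts : Fin k → ℝ}

theorem IsCenteredGaussianOn.hasGaussianLaw_s15 (h : IsCenteredGaussianOn μ X S)
    (hts : ∀ i, ts i ∈ S) : HasGaussianLaw (fun ω i ↦ X (ts i) ω) μ := by
  have hmeas : Measurable (fun ω i ↦ X (ts i) ω) := measurable_pi_lambda _ fun i ↦ h.1 _ (hts i)
  refine ⟨isGaussian_of_map_eq_gaussianReal fun L ↦ ?_⟩
  obtain ⟨v, hv⟩ := h.2 k (fun i ↦ L (Pi.single i 1)) ts hts
  refine ⟨0, v, ?_⟩
  rw [← hv, Measure.map_map (by fun_prop) hmeas]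
  congr 1
  ext ω
  rw [Function.comp_apply, pi_eq_sum_univ' fun i ↦ X (ts i) ω]
  simp [map_sum, mul_comm]

theorem IsCenteredGaussianOn.integral_eq_zero_s15 (h : IsCenteredGaussianOn μ X S) {t : ℝ}
    (ht : t ∈ S) : ∫ ω, X t ω ∂μ = 0 := by
  obtain ⟨v, hv⟩ := h.2 1 (fun _ ↦ 1) (fun _ ↦ t) fun _ ↦ ht
  simp only [Finset.univ_unique, one_mul, Finset.sum_const, Finset.card_singleton, one_smul] at hv
  rw [← integral_map (f := fun x : ℝ ↦ x) (h.1 t ht).aemeasurable (by fun_prop), hv,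
    integral_id_gaussianReal]

theorem sq_l2norm_eq_variance {Y : Ω → ℝ} (hY : AEMeasurable Y μ) (hY0 : ∫ ω, Y ω ∂μ = 0) :
    l2norm μ Y ^ 2 = Var[Y; μ] := by
  rw [l2norm, sq_sqrt (integral_nonneg fun ω ↦ sq_nonneg _), variance_eq_integral hY, hY0]
  simp only [sub_zero]

theorem inv_le_abs_natCast_div_sub {n i j : ℕ} (hij : i ≠ j) :
    (n : ℝ)⁻¹ ≤ |(i : ℝ) / n - j / n| := by
  have hone : (1 : ℤ) ≤ |(i : ℤ) - j| := Int.one_le_abs (sub_ne_zero.2 (by exact_mod_cast hij))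
  rw [← sub_div, abs_div, Nat.abs_cast, inv_eq_one_div]
  exact div_le_div_of_nonneg_right (by exact_mod_cast hone) n.cast_nonneg

theorem stmt15_general (X : ℝ → Ω → ℝ) (C H : ℝ) (hC : 0 ≤ C) (hH : 0 ≤ H)
    (hgauss : IsCenteredGaussianOn μ X (Icc 0 1))
    (hlow : ∀ s ∈ Icc (0 : ℝ) 1, ∀ t ∈ Icc (0 : ℝ) 1, s ≠ t →
      C * |t - s| ^ H ≤ l2norm μ (fun ω ↦ X t ω - X s ω)) (n : ℕ) (hn : 1 ≤ n) :
    C * (n : ℝ) ^ (-H) * √(logb 2 (n + 1) / (2 * π)) ≤ expMaxGrid μ X n := by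
  have hn0 : (0 : ℝ) < n := by exact_mod_cast hn
  have hts (i : Fin (n + 1)) : ((i : ℕ) : ℝ) / n ∈ Icc (0 : ℝ) 1 :=
    ⟨by positivity, (div_le_one hn0).2 (by exact_mod_cast Nat.le_of_lt_succ i.2)⟩
  have hX := hgauss.hasGaussianLaw_s15 hts
  have hX0 (i : Fin (n + 1)) := hgauss.integral_eq_zero_s15 (hts i)
  have hvar (i j : Fin (n + 1)) (hij : i ≠ j) : (C * (n : ℝ) ^ (-H)) ^ 2 ≤
      Var[fun ω ↦ X ((i : ℕ) / n) ω - X ((j : ℕ) / n) ω; μ] := by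
    have hdist := inv_le_abs_natCast_div_sub (n := n) (Fin.val_injective.ne hij)
    have hne : ((j : ℕ) : ℝ) / n ≠ (i : ℕ) / n := fun h ↦ by
      rw [h, sub_self, abs_zero] at hdist
      exact hdist.not_gt (inv_pos.2 hn0)
    have hmean : ∫ ω, (X ((i : ℕ) / n) ω - X ((j : ℕ) / n) ω) ∂μ = 0 := by
      rw [integral_sub (hX.eval i).integrable (hX.eval j).integrable, hX0, hX0, sub_zero]
    rw [← sq_l2norm_eq_variance ((hX.eval i).aemeasurable.fun_sub (hX.eval j).aemeasurable) hmean]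
    refine pow_le_pow_left₀ (by positivity) (le_trans ?_ (hlow _ (hts j) _ (hts i) hne)) 2
    rw [rpow_neg hn0.le, ← inv_rpow hn0.le]
    gcongr
  simpa [expMaxGrid] using mul_sqrt_logb_card_le_integral_iSup hX hX0 (by positivity) hvar

end GaussianProcess

/-- Sudakov-type lower bound for the discrete maximum:
`E[max_{0≤i≤n} X_{i/n}] ≥ C n^{-H} √(log₂(n+1)/(2π))`. -/
theorem stmt15 {Ω : Type} [MeasurableSpace Ω] (μ : Measure Ω) [IsProbabilityMeasure μ]
    (X : ℝ → Ω → ℝ) (C H : ℝ) (hC : 0 < C) (hH : H ∈ Ioo (0:ℝ) 1)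
    (hgauss : IsCenteredGaussianOn μ X (Icc 0 1))
    (hlow : ∀ s ∈ Icc (0:ℝ) 1, ∀ t ∈ Icc (0:ℝ) 1,
      C * |t - s| ^ H ≤ l2norm μ (fun ω => X t ω - X s ω))
    (n : ℕ) (hn : 1 ≤ n) :
    C * (n : ℝ) ^ (-H) * Real.sqrt (Real.logb 2 (n + 1) / (2 * π)) ≤
      expMaxGrid μ X n :=
  stmt15_general X C H hC.le hH.1.le hgauss (fun s hs t ht _ ↦ hlow s hs t ht) n hn
end
end
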